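/- arXiv:2404.01275 — 10 statements merged into one kernel-verified Lean document; each statement's English description precedes it below -/
import Mathlib

section
/- Let J : X → Z be a bounded linear operator between pre-ordered Banach spaces. Then the dual operator J' : Z' → X' is bipositive with respect to the dual wedges if and only if J(X_+) is a dense subset of Z_+. -/
theorem wedge_sep {Z : Type*} [NormedAddCommGroup Z] [NormedSpace ℝ Z]
    (W : Set Z) (h0 : (0 : Z) ∈ W)
    (hadd : ∀ x ∈ W, ∀ y ∈ W, x + y ∈ W)
    (hsmul : ∀ a : ℝ, 0 ≤ a → ∀ x ∈ W, a • x ∈ W) (b : Z) (hb : b ∉ closure W) :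
    ∃ f : Z →L[ℝ] ℝ, (∀ w ∈ W, 0 ≤ f w) ∧ f b < 0 := by
  have hc : Convex ℝ W := by
    intro x hx y hy s t hs ht _
    exact hadd _ (hsmul s hs x hx) _ (hsmul t ht y hy)
  obtain ⟨f, u, hfu, hu⟩ := geometric_hahn_banach_point_closed hc.closure isClosed_closure hb
  have hu0 : u < 0 := by simpa using hu 0 (subset_closure h0)
  refine ⟨f, ?_, hfu.trans hu0⟩
  intro w hw
  by_contra hneg
  have hneg' : f w < 0 := not_le.mp hneg
  have ha : 0 ≤ f b / f w := div_nonneg_of_nonpos (hfu.trans hu0).le hneg'.le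
  have h1 := hu _ (subset_closure (hsmul _ ha w hw))
  rw [map_smul, smul_eq_mul, div_mul_cancel₀ _ hneg'.ne] at h1
  exact absurd hfu (not_lt.mpr h1.le)

/-- Let `J : X → Z` be a bounded linear operator between pre-ordered Banach spaces.
Then the dual operator `J' : Z' → X'`, `z' ↦ z' ∘ J`, is bipositive with respect to
the dual wedges if and only if `J '' Xp` is a dense subset of `Zp`. -/
theorem stmt_1
    {X Z : Type*}
    [NormedAddCommGroup X] [NormedSpace ℝ X] [CompleteSpace X]
    [NormedAddCommGroup Z] [NormedSpace ℝ Z] [CompleteSpace Z]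
    (Xp : Set X) (hXclosed : IsClosed Xp) (hX0 : (0 : X) ∈ Xp)
    (hXadd : ∀ x ∈ Xp, ∀ y ∈ Xp, x + y ∈ Xp)
    (hXsmul : ∀ a : ℝ, 0 ≤ a → ∀ x ∈ Xp, a • x ∈ Xp)
    (Zp : Set Z) (hZclosed : IsClosed Zp) (hZ0 : (0 : Z) ∈ Zp)
    (hZadd : ∀ x ∈ Zp, ∀ y ∈ Zp, x + y ∈ Zp)
    (hZsmul : ∀ a : ℝ, 0 ≤ a → ∀ x ∈ Zp, a • x ∈ Zp)
    (J : X →L[ℝ] Z) :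
    (∀ z' : Z →L[ℝ] ℝ,
        (z'.comp J ∈ {x' : X →L[ℝ] ℝ | ∀ x ∈ Xp, 0 ≤ x' x}
          ↔ z' ∈ {z' : Z →L[ℝ] ℝ | ∀ z ∈ Zp, 0 ≤ z' z}))
      ↔ (J '' Xp ⊆ Zp ∧ Zp ⊆ closure (J '' Xp)) := by
  constructor
  · intro h
    constructor
    · rintro _ ⟨x, hx, rfl⟩
      by_contra hn
      obtain ⟨f, hf, hfb⟩ := wedge_sep Zp hZ0 hZadd hZsmul (J x)
        (by rwa [hZclosed.closure_eq])
      exact absurd ((h f).2 hf x hx) (not_le.mpr hfb)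
    · intro z hz
      by_contra hn
      obtain ⟨f, hf, hfb⟩ := wedge_sep (J '' Xp) ⟨0, hX0, map_zero J⟩
        (by
          rintro _ ⟨x, hx, rfl⟩ _ ⟨y, hy, rfl⟩
          exact ⟨x + y, hXadd x hx y hy, map_add J x y⟩)
        (by
          rintro a ha _ ⟨x, hx, rfl⟩
          exact ⟨a • x, hXsmul a ha x hx, map_smul J a x⟩) z hn
      exact absurd ((h f).1 (fun x hx => hf _ ⟨x, hx, rfl⟩) z hz) (not_le.mpr hfb)
  · rintro ⟨h1, h2⟩ f
    constructor
    · intro hf z hz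
      have hcl : IsClosed {z : Z | 0 ≤ f z} := isClosed_le continuous_const f.continuous
      have hsub : J '' Xp ⊆ {z : Z | 0 ≤ f z} := by
        rintro _ ⟨x, hx, rfl⟩
        exact hf x hx
      exact closure_minimal hsub hcl (h2 hz)
    · intro hf x hx
      exact hf _ (h1 ⟨x, hx, rfl⟩)
end

section
/- Let J : X → Z be a bounded linear operator between pre-ordered Banach spaces. If the wedge Z_+ is generating in Z and J is bipositive, injective, and has majorizing range, then J'(Z'_+) = X'_+, i.e. the dual operator maps the dual wedge of Z' onto the dual wedge of X'. -/
theorem aux_tsum_mem {Z : Type*} [NormedAddCommGroup Z]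
    (Zp : Set Z) (hZclosed : IsClosed Zp) (hZ0 : (0 : Z) ∈ Zp)
    (hZadd : ∀ x ∈ Zp, ∀ y ∈ Zp, x + y ∈ Zp) (w : ℕ → Z) (hw : ∀ n, w n ∈ Zp)
    {s : Z} (hs : HasSum w s) : s ∈ Zp := by
  refine hZclosed.mem_of_tendsto hs (Filter.Eventually.of_forall fun t => ?_)
  exact Finset.sum_induction w (· ∈ Zp) (fun a b ha hb => hZadd a ha b hb) hZ0 (fun n _ => hw n)

theorem aux_bdd {Z : Type*} [NormedAddCommGroup Z] [NormedSpace ℝ Z] [CompleteSpace Z]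
    (Zp : Set Z) (hZclosed : IsClosed Zp) (hZ0 : (0 : Z) ∈ Zp)
    (hZadd : ∀ x ∈ Zp, ∀ y ∈ Zp, x + y ∈ Zp)
    (hZsmul : ∀ a : ℝ, 0 ≤ a → ∀ x ∈ Zp, a • x ∈ Zp)
    (g : Z →ₗ[ℝ] ℝ) (hg : ∀ z ∈ Zp, 0 ≤ g z) :
    ∃ M : ℝ, 0 < M ∧ ∀ z ∈ Zp, g z ≤ M * ‖z‖ := by
  by_contra! hcon
  have h1 : ∀ n : ℕ, ∃ w ∈ Zp, ‖w‖ = (1 / 2) ^ n ∧ (2 : ℝ) ^ n ≤ g w := by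
    intro n
    obtain ⟨z, hz, hlt⟩ := hcon (4 ^ n) (by positivity)
    have hz0 : z ≠ 0 := by
      rintro rfl
      simp at hlt
    have hzn : 0 < ‖z‖ := norm_pos_iff.mpr hz0
    refine ⟨((1 / 2) ^ n * ‖z‖⁻¹) • z, hZsmul _ (by positivity) _ hz, ?_, ?_⟩
    · rw [norm_smul, Real.norm_of_nonneg (by positivity)]
      field_simp
    · rw [map_smul, smul_eq_mul]
      calc (2 : ℝ) ^ n = ((1 / 2) ^ n * ‖z‖⁻¹) * (4 ^ n * ‖z‖) := by
            have : (4 : ℝ) ^ n = 2 ^ n * 2 ^ n := by rw [← mul_pow]; norm_num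
            rw [this, one_div, inv_pow]
            field_simp
        _ ≤ _ := by gcongr
  choose w hw hwn hgw using h1
  have hsum : Summable w := by
    refine Summable.of_norm ?_
    simp_rw [hwn]
    exact summable_geometric_two
  have key : ∀ n : ℕ, (2 : ℝ) ^ n ≤ g (∑' k, w k) := by
    intro n
    have h2 : HasSum (Function.update w n 0) (0 - w n + ∑' k, w k) := hsum.hasSum.update n 0
    have h3 := aux_tsum_mem Zp hZclosed hZ0 hZadd _ (fun k => by
      by_cases hk : k = n
      · subst hk; simpa using hZ0
      · simpa [Function.update_of_ne hk] using hw k) h2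
    have h4 := hg _ h3
    simp only [map_add, map_sub, map_zero] at h4
    linarith [hgw n]
  obtain ⟨n, hn⟩ := pow_unbounded_of_one_lt (g (∑' k, w k)) (one_lt_two)
  linarith [key n]

theorem aux_approx {Z : Type*} [NormedAddCommGroup Z] [NormedSpace ℝ Z] [CompleteSpace Z]
    (Zp : Set Z) (hZ0 : (0 : Z) ∈ Zp)
    (hZadd : ∀ x ∈ Zp, ∀ y ∈ Zp, x + y ∈ Zp)
    (hZsmul : ∀ a : ℝ, 0 ≤ a → ∀ x ∈ Zp, a • x ∈ Zp)
    (hgen : ∀ z : Z, ∃ a ∈ Zp, ∃ b ∈ Zp, z = a - b) :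
    ∃ C : ℝ, 0 ≤ C ∧ ∀ z : Z, ∃ a ∈ Zp, ∃ b ∈ Zp, ‖a‖ ≤ C * ‖z‖ ∧ ‖b‖ ≤ C * ‖z‖ ∧
      ‖z - (a - b)‖ ≤ (1 / 2) * ‖z‖ := by
  let A : ℕ → Set Z := fun n => {z | ∃ a ∈ Zp, ∃ b ∈ Zp, ‖a‖ ≤ n ∧ ‖b‖ ≤ n ∧ z = a - b}
  have hU : ⋃ n, closure (A n) = Set.univ := by
    rw [Set.eq_univ_iff_forall]
    intro z
    obtain ⟨a, ha, b, hb, h⟩ := hgen z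
    obtain ⟨n, hn⟩ := exists_nat_ge (max ‖a‖ ‖b‖)
    exact Set.mem_iUnion.mpr ⟨n, subset_closure
      ⟨a, ha, b, hb, (le_max_left _ _).trans hn, (le_max_right _ _).trans hn, h⟩⟩
  obtain ⟨n, x, hx⟩ := nonempty_interior_of_iUnion_of_closed (fun n => isClosed_closure) hU
  obtain ⟨ε, hε, hball⟩ := Metric.isOpen_iff.mp isOpen_interior x hx
  have hcl : ∀ y ∈ Metric.ball x ε, ∀ δ > 0, ∃ a ∈ Zp, ∃ b ∈ Zp, ‖a‖ ≤ n ∧ ‖b‖ ≤ n ∧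
      ‖y - (a - b)‖ < δ := by
    intro y hy δ hδ
    obtain ⟨u, ⟨a, ha, b, hb, h1, h2, rfl⟩, hd⟩ :=
      Metric.mem_closure_iff.mp (interior_subset (hball hy)) δ hδ
    exact ⟨a, ha, b, hb, h1, h2, by rwa [← dist_eq_norm]⟩
  have hsmall : ∀ y : Z, ‖y‖ < ε → ∀ δ > 0, ∃ a ∈ Zp, ∃ b ∈ Zp, ‖a‖ ≤ n ∧ ‖b‖ ≤ n ∧
      ‖y - (a - b)‖ ≤ δ := by
    intro y hy δ hδ
    obtain ⟨a, ha, b, hb, h1, h2, h3⟩ := hcl (x + y) (by simpa using hy) δ hδ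
    obtain ⟨c, hc, d, hd, h4, h5, h6⟩ := hcl (x - y) (by simpa [dist_eq_norm] using hy) δ hδ
    have hh : ∀ u v : Z, ‖u‖ ≤ n → ‖v‖ ≤ n → ‖(1 / 2 : ℝ) • (u + v)‖ ≤ n := by
      intro u v hu hv
      rw [norm_smul, Real.norm_of_nonneg (by norm_num)]
      linarith [norm_add_le u v]
    refine ⟨(1 / 2 : ℝ) • (a + d), hZsmul _ (by norm_num) _ (hZadd _ ha _ hd),
      (1 / 2 : ℝ) • (b + c), hZsmul _ (by norm_num) _ (hZadd _ hb _ hc),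
      hh _ _ h1 h5, hh _ _ h2 h4, ?_⟩
    have : y - ((1 / 2 : ℝ) • (a + d) - (1 / 2 : ℝ) • (b + c))
        = (1 / 2 : ℝ) • ((x + y - (a - b)) - (x - y - (c - d))) := by
      module
    rw [this, norm_smul, Real.norm_of_nonneg (by norm_num)]
    linarith [norm_sub_le (x + y - (a - b)) (x - y - (c - d))]
  refine ⟨n * (2 / ε), by positivity, fun z => ?_⟩
  by_cases hz : z = 0
  · subst hz
    exact ⟨0, hZ0, 0, hZ0, by simp, by simp, by simp⟩
  have hzn : 0 < ‖z‖ := norm_pos_iff.mpr hz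
  have ht : 0 < ε / (2 * ‖z‖) := by positivity
  obtain ⟨a, ha, b, hb, h1, h2, h3⟩ := hsmall ((ε / (2 * ‖z‖)) • z) (by
    rw [norm_smul, Real.norm_of_nonneg ht.le]
    have : ε / (2 * ‖z‖) * ‖z‖ = ε / 2 := by field_simp
    linarith) (ε / 4) (by positivity)
  have hs : 0 < 2 * ‖z‖ / ε := by positivity
  have hh : ∀ u : Z, ‖u‖ ≤ n → ‖(2 * ‖z‖ / ε) • u‖ ≤ n * (2 / ε) * ‖z‖ := by
    intro u hu
    rw [norm_smul, Real.norm_of_nonneg hs.le]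
    calc 2 * ‖z‖ / ε * ‖u‖ ≤ 2 * ‖z‖ / ε * n := by gcongr
      _ = _ := by ring
  refine ⟨(2 * ‖z‖ / ε) • a, hZsmul _ hs.le _ ha, (2 * ‖z‖ / ε) • b, hZsmul _ hs.le _ hb,
    hh _ h1, hh _ h2, ?_⟩
  have e : z - ((2 * ‖z‖ / ε) • a - (2 * ‖z‖ / ε) • b)
      = (2 * ‖z‖ / ε) • ((ε / (2 * ‖z‖)) • z - (a - b)) := by
    have : (2 * ‖z‖ / ε) * (ε / (2 * ‖z‖)) = 1 := by field_simp
    rw [smul_sub, smul_smul, this, one_smul, smul_sub]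
  rw [e, norm_smul, Real.norm_of_nonneg hs.le]
  calc 2 * ‖z‖ / ε * _ ≤ 2 * ‖z‖ / ε * (ε / 4) := by gcongr
    _ = _ := by field_simp; norm_num

theorem aux_cont {Z : Type*} [NormedAddCommGroup Z] [NormedSpace ℝ Z] [CompleteSpace Z]
    (Zp : Set Z) (hZclosed : IsClosed Zp) (hZ0 : (0 : Z) ∈ Zp)
    (hZadd : ∀ x ∈ Zp, ∀ y ∈ Zp, x + y ∈ Zp)
    (hZsmul : ∀ a : ℝ, 0 ≤ a → ∀ x ∈ Zp, a • x ∈ Zp)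
    (hgen : ∀ z : Z, ∃ a ∈ Zp, ∃ b ∈ Zp, z = a - b)
    (g : Z →ₗ[ℝ] ℝ) (hg : ∀ z ∈ Zp, 0 ≤ g z) :
    ∃ K : ℝ, ∀ z, ‖g z‖ ≤ K * ‖z‖ := by
  obtain ⟨M, hM, hgM⟩ := aux_bdd Zp hZclosed hZ0 hZadd hZsmul g hg
  obtain ⟨C, hC, happ⟩ := aux_approx Zp hZ0 hZadd hZsmul hgen
  choose fa hfa fb hfb hna hnb hnr using happ
  refine ⟨M * (C * 2), fun z => ?_⟩
  let r : ℕ → Z := fun k => Nat.rec z (fun _ u => u - (fa u - fb u)) k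
  have hr1 : ∀ k, r (k + 1) = r k - (fa (r k) - fb (r k)) := fun k => rfl
  have hr : ∀ k, ‖r k‖ ≤ (1 / 2) ^ k * ‖z‖ := by
    intro k
    induction k with
    | zero => simp [r]
    | succ k ih =>
      rw [hr1, pow_succ]
      linarith [hnr (r k)]
  have hgeo : HasSum (fun k : ℕ => (1 / 2 : ℝ) ^ k * (C * ‖z‖)) (2 * (C * ‖z‖)) :=
    hasSum_geometric_two.mul_right _
  have hba : ∀ k, ‖fa (r k)‖ ≤ (1 / 2 : ℝ) ^ k * (C * ‖z‖) := fun k =>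
    (hna _).trans (by nlinarith [mul_le_mul_of_nonneg_left (hr k) hC])
  have hbb : ∀ k, ‖fb (r k)‖ ≤ (1 / 2 : ℝ) ^ k * (C * ‖z‖) := fun k =>
    (hnb _).trans (by nlinarith [mul_le_mul_of_nonneg_left (hr k) hC])
  have hsa : Summable (fun k => fa (r k)) := Summable.of_norm_bounded hgeo.summable hba
  have hsb : Summable (fun k => fb (r k)) := Summable.of_norm_bounded hgeo.summable hbb
  have hA := aux_tsum_mem Zp hZclosed hZ0 hZadd _ (fun k => hfa (r k)) hsa.hasSum
  have hB := aux_tsum_mem Zp hZclosed hZ0 hZadd _ (fun k => hfb (r k)) hsb.hasSum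
  have hnA : ‖∑' k, fa (r k)‖ ≤ 2 * (C * ‖z‖) := tsum_of_norm_bounded hgeo hba
  have hnB : ‖∑' k, fb (r k)‖ ≤ 2 * (C * ‖z‖) := tsum_of_norm_bounded hgeo hbb
  have hpart : ∀ n, ∑ k ∈ Finset.range n, (fa (r k) - fb (r k)) = z - r n := by
    intro n
    induction n with
    | zero => simp [r]
    | succ n ih => rw [Finset.sum_range_succ, ih, hr1]; abel
  have ht1 := (hsa.hasSum.sub hsb.hasSum).tendsto_sum_nat
  have hr0 : Filter.Tendsto r Filter.atTop (nhds 0) := by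
    refine squeeze_zero_norm hr ?_
    have := (tendsto_pow_atTop_nhds_zero_of_lt_one (r := (1 / 2 : ℝ)) (by norm_num)
      (by norm_num)).mul_const ‖z‖
    simpa using this
  have ht2 : Filter.Tendsto (fun n => z - r n) Filter.atTop (nhds z) := by
    simpa using hr0.const_sub z
  have heq : ∑' k, fa (r k) - ∑' k, fb (r k) = z := by
    refine tendsto_nhds_unique ht1 ?_
    simpa only [hpart] using ht2
  rw [← heq, map_sub, heq, Real.norm_eq_abs, abs_le]
  have h1 := hg _ hA
  have h2 := hg _ hB
  have h3 := hgM _ hA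
  have h4 := hgM _ hB
  have h5 := mul_le_mul_of_nonneg_left hnA hM.le
  have h6 := mul_le_mul_of_nonneg_left hnB hM.le
  constructor <;> linarith

/-- Let `J : X → Z` be a bounded linear operator between pre-ordered Banach spaces.  If the
wedge `Zp` is generating in `Z` and `J` is bipositive, injective, and has majorizing
range, then `J'` maps the dual wedge of `Z'` onto the dual wedge of `X'`. -/
theorem stmt_2
    {X Z : Type*}
    [NormedAddCommGroup X] [NormedSpace ℝ X] [CompleteSpace X]
    [NormedAddCommGroup Z] [NormedSpace ℝ Z] [CompleteSpace Z]
    (Xp : Set X) (hXclosed : IsClosed Xp) (hX0 : (0 : X) ∈ Xp)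
    (hXadd : ∀ x ∈ Xp, ∀ y ∈ Xp, x + y ∈ Xp)
    (hXsmul : ∀ a : ℝ, 0 ≤ a → ∀ x ∈ Xp, a • x ∈ Xp)
    (Zp : Set Z) (hZclosed : IsClosed Zp) (hZ0 : (0 : Z) ∈ Zp)
    (hZadd : ∀ x ∈ Zp, ∀ y ∈ Zp, x + y ∈ Zp)
    (hZsmul : ∀ a : ℝ, 0 ≤ a → ∀ x ∈ Zp, a • x ∈ Zp)
    (J : X →L[ℝ] Z)
    (hgen : ∀ z : Z, ∃ a ∈ Zp, ∃ b ∈ Zp, z = a - b)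
    (hbipos : ∀ x : X, J x ∈ Zp ↔ x ∈ Xp)
    (hinj : Function.Injective J)
    (hmaj : ∀ z : Z, ∃ x : X, J x - z ∈ Zp) :
    (fun z' : Z →L[ℝ] ℝ => z'.comp J) '' {z' : Z →L[ℝ] ℝ | ∀ z ∈ Zp, 0 ≤ z' z}
      = {x' : X →L[ℝ] ℝ | ∀ x ∈ Xp, 0 ≤ x' x} := by
  ext x'
  constructor
  · rintro ⟨z', hz', rfl⟩ x hx
    exact hz' _ ((hbipos x).mpr hx)
  · intro hx'
    let S : PointedCone ℝ Z :=
      { carrier := Zp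
        add_mem' := fun {a b} ha hb => hZadd a ha b hb
        zero_mem' := hZ0
        smul_mem' := fun c x hx => hZsmul c c.2 x hx }
    have hinj' : Function.Injective (J : X →ₗ[ℝ] Z) := hinj
    let e := LinearEquiv.ofInjective (J : X →ₗ[ℝ] Z) hinj'
    let f : Z →ₗ.[ℝ] ℝ :=
      ⟨LinearMap.range (J : X →ₗ[ℝ] Z), (x' : X →ₗ[ℝ] ℝ).comp (e.symm : _ →ₗ[ℝ] X)⟩
    have hf : ∀ x (h : J x ∈ f.domain), f ⟨J x, h⟩ = x' x := by
      intro x h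
      change x' (e.symm ⟨J x, h⟩) = x' x
      congr 1
      rw [LinearEquiv.symm_apply_eq]
      rfl
    obtain ⟨g, hgf, hg⟩ := riesz_extension S f (by
      rintro ⟨_, x, rfl⟩ h
      have := hf x ⟨x, rfl⟩
      exact (hx' x ((hbipos x).mp h)).trans_eq this.symm) (by
      intro y
      obtain ⟨x, hx⟩ := hmaj (-y)
      rw [sub_neg_eq_add] at hx
      exact ⟨⟨J x, x, rfl⟩, hx⟩)
    obtain ⟨K, hK⟩ := aux_cont Zp hZclosed hZ0 hZadd hZsmul hgen g hg
    refine ⟨g.mkContinuous K hK, fun z hz => hg z hz, ?_⟩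
    ext x
    exact (hgf ⟨J x, x, rfl⟩).trans (hf x ⟨x, rfl⟩)
end

section
/- Let Z and X be ordered Banach spaces and assume there exists a positive bounded linear bijection T : Z → X. If the cone of X is a face of its bidual wedge, then the cone of Z is also a face of its bidual wedge. -/
/-- A wedge in a real vector space: a non-empty subset closed under addition and
under multiplication by non-negative scalars. -/
def IsWedge {V : Type*} [AddCommGroup V] [Module ℝ V] (W : Set V) : Prop :=
  W.Nonempty ∧ (∀ x ∈ W, ∀ y ∈ W, x + y ∈ W) ∧ (∀ a : ℝ, 0 ≤ a → ∀ x ∈ W, a • x ∈ W)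

/-- `C` is a face of the wedge `W`: `C` is a subset of `W` which is itself a wedge and
which contains the order interval `[0, w] = {y : y ∈ W ∧ w - y ∈ W}` for every `w ∈ C`. -/
def IsFaceOf {V : Type*} [AddCommGroup V] [Module ℝ V] (C W : Set V) : Prop :=
  C ⊆ W ∧ IsWedge C ∧ ∀ w ∈ C, ∀ y ∈ W, w - y ∈ W → y ∈ C

/-- The dual wedge of a subset `W` of a normed space, inside the topological dual. -/
def dualWedge {V : Type*} [NormedAddCommGroup V] [NormedSpace ℝ V] (W : Set V) :
    Set (V →L[ℝ] ℝ) := {f | ∀ x ∈ W, 0 ≤ f x}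

/-- Let `Z` and `X` be ordered Banach spaces and assume there exists a positive bounded
linear bijection `T : Z → X`.  If the cone of `X` is a face of its bidual wedge, then
the cone of `Z` is also a face of its bidual wedge. -/
theorem stmt_4
    {Z X : Type*}
    [NormedAddCommGroup Z] [NormedSpace ℝ Z] [CompleteSpace Z]
    [NormedAddCommGroup X] [NormedSpace ℝ X] [CompleteSpace X]
    (Zp : Set Z) (hZclosed : IsClosed Zp) (hZ0 : (0 : Z) ∈ Zp)
    (hZadd : ∀ x ∈ Zp, ∀ y ∈ Zp, x + y ∈ Zp)
    (hZsmul : ∀ a : ℝ, 0 ≤ a → ∀ x ∈ Zp, a • x ∈ Zp)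
    (hZcone : ∀ z : Z, z ∈ Zp → -z ∈ Zp → z = 0)
    (Xp : Set X) (hXclosed : IsClosed Xp) (hX0 : (0 : X) ∈ Xp)
    (hXadd : ∀ x ∈ Xp, ∀ y ∈ Xp, x + y ∈ Xp)
    (hXsmul : ∀ a : ℝ, 0 ≤ a → ∀ x ∈ Xp, a • x ∈ Xp)
    (hXcone : ∀ x : X, x ∈ Xp → -x ∈ Xp → x = 0)
    (T : Z →L[ℝ] X)
    (hTpos : ∀ z ∈ Zp, T z ∈ Xp)
    (hTbij : Function.Bijective T)
    (hXface : IsFaceOf ((NormedSpace.inclusionInDoubleDual ℝ X) '' Xp)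
      (dualWedge (dualWedge Xp))) :
    IsFaceOf ((NormedSpace.inclusionInDoubleDual ℝ Z) '' Zp)
      (dualWedge (dualWedge Zp)) := by
  have hk : ∀ (z : Z) (f : Z →L[ℝ] ℝ),
      NormedSpace.inclusionInDoubleDual ℝ Z z f = f z := fun z f => rfl
  have hkX : ∀ (x : X) (f : X →L[ℝ] ℝ),
      NormedSpace.inclusionInDoubleDual ℝ X x f = f x := fun z f => rfl
  -- the cone is recovered from the bidual wedge
  have hsep : ∀ z : Z, (∀ f ∈ dualWedge Zp, 0 ≤ f z) → z ∈ Zp := by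
    intro z hz
    by_contra hzn
    have hconv : Convex ℝ Zp := by
      intro x hx y hy a b ha hb _
      exact hZadd _ (hZsmul a ha x hx) _ (hZsmul b hb y hy)
    obtain ⟨f, u, hfu, hf⟩ := geometric_hahn_banach_point_closed hconv hZclosed hzn
    have hu : u < 0 := by simpa using hf 0 hZ0
    have hfpos : f ∈ dualWedge Zp := by
      intro b hb
      by_contra hneg
      have hneg : f b < 0 := not_le.mp hneg
      have h1 := hf _ (hZsmul (u / f b) (div_nonneg_of_nonpos hu.le hneg.le) b hb)
      rw [map_smul, smul_eq_mul, div_mul_cancel₀ _ hneg.ne] at h1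
      exact lt_irrefl _ h1
    have := hz f hfpos
    linarith
  refine ⟨?_, ⟨⟨_, 0, hZ0, rfl⟩, ?_, ?_⟩, ?_⟩
  · rintro _ ⟨z, hz, rfl⟩ f hf
    exact hf z hz
  · rintro _ ⟨x, hx, rfl⟩ _ ⟨y, hy, rfl⟩
    exact ⟨x + y, hZadd x hx y hy, map_add _ _ _⟩
  · rintro a ha _ ⟨x, hx, rfl⟩
    exact ⟨a • x, hZsmul a ha x hx, map_smul _ _ _⟩
  · rintro _ ⟨z, hz, rfl⟩ φ hφ hφ'
    let e : Z ≃L[ℝ] X := ContinuousLinearEquiv.ofBijective T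
      (LinearMap.ker_eq_bot.mpr hTbij.1) (LinearMap.range_eq_top.mpr hTbij.2)
    have he : ∀ z, e z = T z := fun z => rfl
    let P : (X →L[ℝ] ℝ) →L[ℝ] (Z →L[ℝ] ℝ) :=
      (ContinuousLinearMap.compL ℝ Z X ℝ).flip T
    have hP : ∀ g, P g = g.comp T := fun g => rfl
    have hPpos : ∀ g ∈ dualWedge Xp, P g ∈ dualWedge Zp :=
      fun g hg z hz => hg (T z) (hTpos z hz)
    obtain ⟨x, hx, hxe⟩ := hXface.2.2 (NormedSpace.inclusionInDoubleDual ℝ X (T z))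
      ⟨T z, hTpos z hz, rfl⟩ (φ.comp P) (fun g hg => hφ _ (hPpos g hg))
      (fun g hg => hφ' _ (hPpos g hg))
    have key : NormedSpace.inclusionInDoubleDual ℝ Z (e.symm x) = φ := by
      ext f
      have h1 := DFunLike.congr_fun hxe (f.comp (e.symm : X →L[ℝ] Z))
      have h2 : P (f.comp (e.symm : X →L[ℝ] Z)) = f := by
        ext w
        change f (e.symm (e w)) = f w
        simp
      rw [ContinuousLinearMap.comp_apply, h2] at h1
      exact h1
    refine ⟨e.symm x, hsep _ ?_, key⟩
    intro f hf
    have := hφ f hf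
    rw [← key] at this
    exact this
end

section
/- Let X be a pre-ordered Banach space whose wedge X_+ is generating, let V ⊆ X be a vector subspace, let x' ∈ X'_+ be a positive continuous functional, and let φ : V → ℝ be linear. Then the following are equivalent: (i) there exists y' ∈ X' with 0 ≤ y' ≤ x' (i.e. y' ∈ X'_+ and x' − y' ∈ X'_+) such that y' restricted to V equals φ; (ii) for all v ∈ V and all w ∈ X_+, the inequality v ≤ w implies φ(v) ≤ ⟨x', w⟩. -/
theorem abs_max_zero_le (t : ℝ) : |max t 0| ≤ |t| := by grind

theorem abs_max_neg_zero_le (t : ℝ) : |max (-t) 0| ≤ |t| := by grind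

theorem max_sub_max_neg (t : ℝ) : max t 0 - max (-t) 0 = t := by grind

/-- A linear functional with `|g| ≤ K‖·‖` on a closed generating wedge is bounded. The proof
applies the open mapping theorem to the canonical map from `ℓ¹` of the positive unit ball. -/
theorem bounded_of_bounded_on_wedge
    {X : Type*}
    [NormedAddCommGroup X] [NormedSpace ℝ X] [CompleteSpace X]
    (Xp : Set X) (hXclosed : IsClosed Xp) (hX0 : (0 : X) ∈ Xp)
    (hXadd : ∀ x ∈ Xp, ∀ y ∈ Xp, x + y ∈ Xp)
    (hXsmul : ∀ a : ℝ, 0 ≤ a → ∀ x ∈ Xp, a • x ∈ Xp)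
    (hXgen : ∀ x : X, ∃ a ∈ Xp, ∃ b ∈ Xp, x = a - b)
    (g : X →ₗ[ℝ] ℝ) (K : ℝ) (hK : 0 ≤ K) (hg : ∀ x ∈ Xp, |g x| ≤ K * ‖x‖) :
    ∃ C, ∀ x, ‖g x‖ ≤ C * ‖x‖ := by
  classical
  let I := {x : X // x ∈ Xp ∧ ‖x‖ ≤ 1}
  have hsum : ∀ c : lp (fun _ : I => ℝ) 1, Summable fun i => |c i| := by
    intro c
    have := (memℓp_gen_iff (p := 1) (by simp)).1 (lp.memℓp c)
    simpa using this
  have hnorm : ∀ c : lp (fun _ : I => ℝ) 1, ‖c‖ = ∑' i, |c i| := by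
    intro c
    have := lp.norm_eq_tsum_rpow (p := 1) (by simp) c
    simpa using this
  have key : ∀ f : I → ℝ, Summable (fun i => |f i|) →
      Summable (fun i => f i • (i : X)) ∧ ‖∑' i, f i • (i : X)‖ ≤ ∑' i, |f i| := by
    intro f hf
    have hle : ∀ i : I, ‖f i • (i : X)‖ ≤ |f i| := by
      intro i
      rw [norm_smul, Real.norm_eq_abs]
      exact mul_le_of_le_one_right (abs_nonneg _) i.2.2
    exact ⟨hf.of_norm_bounded hle, tsum_of_norm_bounded hf.hasSum hle⟩
  let T0 : lp (fun _ : I => ℝ) 1 →ₗ[ℝ] X :=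
    { toFun := fun c => ∑' i, c i • (i : X)
      map_add' := by
        intro c d
        rw [← (key _ (hsum c)).1.tsum_add (key _ (hsum d)).1]
        simp [add_smul]
      map_smul' := by
        intro r c
        simp only [RingHom.id_apply]
        rw [← (key _ (hsum c)).1.tsum_const_smul r]
        simp [mul_smul] }
  let T : lp (fun _ : I => ℝ) 1 →L[ℝ] X := T0.mkContinuous 1 (by
    intro c
    rw [one_mul, hnorm]
    exact (key _ (hsum c)).2)
  have hT : ∀ c, T c = ∑' i, c i • (i : X) := fun c => rfl
  have hTp : ∀ x ∈ Xp, ∃ c, T c = x := by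
    intro x hx
    by_cases h0 : x = 0
    · exact ⟨0, by simp [h0]⟩
    have hn : ‖x‖ ≠ 0 := norm_ne_zero_iff.2 h0
    let i0 : I := ⟨‖x‖⁻¹ • x, hXsmul _ (by positivity) _ hx, by
      rw [norm_smul, norm_inv, norm_norm, inv_mul_cancel₀ hn]⟩
    refine ⟨lp.single 1 i0 ‖x‖, ?_⟩
    rw [hT, tsum_eq_single i0]
    · rw [lp.single_apply_self]
      simp [i0, smul_smul, hn]
    · intro j hj
      rw [lp.single_apply_ne _ _ _ hj, zero_smul]
  have hsurj : Function.Surjective T := by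
    intro x
    obtain ⟨a, ha, b, hb, rfl⟩ := hXgen x
    obtain ⟨c, rfl⟩ := hTp a ha
    obtain ⟨d, rfl⟩ := hTp b hb
    exact ⟨c - d, map_sub _ _ _⟩
  obtain ⟨C, hC, hpre⟩ := T.exists_preimage_norm_le hsurj
  have hpos : ∀ f : I → ℝ, (∀ i, 0 ≤ f i) → ∑' i, f i • (i : X) ∈ Xp := by
    intro f hf
    by_cases hs : Summable fun i => f i • (i : X)
    · refine hXclosed.mem_of_tendsto hs.hasSum (Filter.Eventually.of_forall fun s => ?_)
      refine Finset.sum_induction _ (· ∈ Xp) (fun a b ha hb => hXadd a ha b hb) hX0 ?_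
      intro i _
      exact hXsmul _ (hf i) _ i.2.1
    · rw [tsum_eq_zero_of_not_summable hs]
      exact hX0
  refine ⟨2 * K * C, fun x => ?_⟩
  obtain ⟨c, rfl, hc⟩ := hpre x
  have h1 : Summable fun i => |max (c i) 0| :=
    (hsum c).of_nonneg_of_le (fun _ => abs_nonneg _) (fun i => abs_max_zero_le (c i))
  have h2 : Summable fun i => |max (-c i) 0| :=
    (hsum c).of_nonneg_of_le (fun _ => abs_nonneg _) (fun i => abs_max_neg_zero_le (c i))
  have e1 : ∑' i, |max (c i) 0| ≤ ‖c‖ := by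
    rw [hnorm]
    exact h1.tsum_le_tsum (fun i => abs_max_zero_le (c i)) (hsum c)
  have e2 : ∑' i, |max (-c i) 0| ≤ ‖c‖ := by
    rw [hnorm]
    exact h2.tsum_le_tsum (fun i => abs_max_neg_zero_le (c i)) (hsum c)
  have hdec : T c = ∑' i, max (c i) 0 • (i : X) - ∑' i, max (-c i) 0 • (i : X) := by
    rw [hT, ← (key _ h1).1.tsum_sub (key _ h2).1]
    refine tsum_congr fun i => ?_
    rw [← sub_smul, max_sub_max_neg (c i)]
  have b1 := hg _ (hpos (fun i => max (c i) 0) (fun i => le_max_right _ _))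
  have b2 := hg _ (hpos (fun i => max (-c i) 0) (fun i => le_max_right _ _))
  have n1 := mul_le_mul_of_nonneg_left (((key _ h1).2.trans e1).trans hc) hK
  have n2 := mul_le_mul_of_nonneg_left (((key _ h2).2.trans e2).trans hc) hK
  have : g (T c) = g (∑' i, max (c i) 0 • (i : X)) - g (∑' i, max (-c i) 0 • (i : X)) := by
    rw [hdec, map_sub]
  rw [Real.norm_eq_abs, this]
  refine (abs_sub _ _).trans ?_
  linarith

/-- Let `X` be a pre-ordered Banach space whose wedge `Xp` is generating, let `V ⊆ X` be a
vector subspace, let `x'` be a positive continuous functional, and let `φ : V → ℝ` be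
linear.  Then there exists `y' ∈ X'` with `0 ≤ y' ≤ x'` (with respect to the dual
wedge) extending `φ` if and only if for all `v ∈ V` and `w ∈ Xp` with `v ≤ w` one has
`φ(v) ≤ ⟨x', w⟩`. -/
theorem stmt_6
    {X : Type*}
    [NormedAddCommGroup X] [NormedSpace ℝ X] [CompleteSpace X]
    (Xp : Set X) (hXclosed : IsClosed Xp) (hX0 : (0 : X) ∈ Xp)
    (hXadd : ∀ x ∈ Xp, ∀ y ∈ Xp, x + y ∈ Xp)
    (hXsmul : ∀ a : ℝ, 0 ≤ a → ∀ x ∈ Xp, a • x ∈ Xp)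
    (hXgen : ∀ x : X, ∃ a ∈ Xp, ∃ b ∈ Xp, x = a - b)
    (V : Submodule ℝ X)
    (x' : X →L[ℝ] ℝ) (hx' : ∀ x ∈ Xp, 0 ≤ x' x)
    (φ : V →ₗ[ℝ] ℝ) :
    (∃ y' : X →L[ℝ] ℝ,
        (∀ x ∈ Xp, 0 ≤ y' x) ∧ (∀ x ∈ Xp, y' x ≤ x' x) ∧ (∀ v : V, y' v = φ v))
      ↔ (∀ (v : V) (w : X), w ∈ Xp → w - (v : X) ∈ Xp → φ v ≤ x' w) := by
  constructor
  · rintro ⟨y, hy0, hy1, hyv⟩ v w hw hwv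
    have h1 := hy0 _ hwv
    have h2 := hy1 _ hw
    rw [map_sub, hyv] at h1
    linarith
  intro h
  let S : X → Set ℝ := fun x => {r | ∃ w ∈ Xp, w - x ∈ Xp ∧ x' w = r}
  have Sne : ∀ x, (S x).Nonempty := by
    intro x
    obtain ⟨a, ha, b, hb, rfl⟩ := hXgen x
    exact ⟨x' a, a, ha, by simpa using hb, rfl⟩
  have Sbd : ∀ x, BddBelow (S x) := by
    intro x
    refine ⟨0, ?_⟩
    rintro _ ⟨w, hw, -, rfl⟩
    exact hx' w hw
  have hle : ∀ c : ℝ, 0 < c → ∀ x, sInf (S (c • x)) ≤ c * sInf (S x) := by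
    intro c hc x
    rw [← div_le_iff₀' hc]
    refine le_csInf (Sne x) ?_
    rintro _ ⟨w, hw, hwx, rfl⟩
    rw [div_le_iff₀' hc]
    refine csInf_le (Sbd _) ⟨c • w, hXsmul c hc.le w hw, ?_, by simp⟩
    rw [← smul_sub]
    exact hXsmul c hc.le _ hwx
  obtain ⟨g, hgv, hgN⟩ := exists_extension_of_le_sublinear ⟨V, φ⟩ (fun x => sInf (S x))
    (by
      intro c hc x
      refine le_antisymm (hle c hc x) ?_
      have := hle c⁻¹ (inv_pos.2 hc) (c • x)
      rw [inv_smul_smul₀ hc.ne'] at this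
      rwa [← div_eq_inv_mul, le_div_iff₀' hc] at this)
    (by
      intro x y
      show sInf (S (x + y)) ≤ sInf (S x) + sInf (S y)
      rw [← sub_le_iff_le_add]
      refine le_csInf (Sne x) ?_
      rintro _ ⟨w, hw, hwy, rfl⟩
      rw [sub_le_comm]
      refine le_csInf (Sne y) ?_
      rintro _ ⟨u, hu, hux, rfl⟩
      rw [sub_le_iff_le_add]
      refine csInf_le (Sbd _) ⟨u + w, hXadd u hu w hw, ?_, by simp⟩
      have := hXadd _ hux _ hwy
      rwa [sub_add_sub_comm, add_comm y x] at this)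
    (by
      intro v
      refine le_csInf (Sne v) ?_
      rintro _ ⟨w, hw, hwv, rfl⟩
      exact h v w hw hwv)
  have g0 : ∀ x ∈ Xp, 0 ≤ g x := by
    intro x hx
    have h1 := hgN (-x)
    have h2 : sInf (S (-x)) ≤ 0 := csInf_le (Sbd _) ⟨0, hX0, by simpa using hx, by simp⟩
    rw [map_neg] at h1
    linarith
  have g1 : ∀ x ∈ Xp, g x ≤ x' x := by
    intro x hx
    exact (hgN x).trans (csInf_le (Sbd _) ⟨x, hx, by simpa using hX0, rfl⟩)
  obtain ⟨C, hC⟩ := bounded_of_bounded_on_wedge Xp hXclosed hX0 hXadd hXsmul hXgen g ‖x'‖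
    (norm_nonneg _) (by
      intro x hx
      rw [abs_of_nonneg (g0 x hx)]
      exact (g1 x hx).trans ((le_abs_self _).trans (x'.le_opNorm x)))
  exact ⟨g.mkContinuous C hC, g0, g1, hgv⟩
end

section
/- Let X be an ordered Banach space with normal cone, let Z be a pre-ordered Banach space, and let J : X → Z be a positive bounded linear operator with dense range. Assume there is a sequence (R_n) of positive bounded linear operators Z → X such that (J R_n) converges to the identity of Z in the weak operator topology and (R_n J) converges to the identity of X in the weak operator topology. If the cone X_+ is a face of the bidual wedge X''_+, then J(X_+) is a face of Z_+ (in particular, Z_+ is a cone). -/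
/-- Let `X` be an ordered Banach space with normal cone, let `Z` be a pre-ordered Banach
space, and let `J : X → Z` be a positive bounded linear operator with dense range.
Assume there is a sequence `(Rₙ)` of positive bounded linear operators `Z → X` such
that `(J Rₙ)` converges to the identity of `Z` and `(Rₙ J)` converges to the identity
of `X`, both in the weak operator topology.  If the cone `Xp` is a face of the bidual
wedge, then `J '' Xp` is a face of `Zp`; in particular `Zp` is a cone. -/
theorem stmt_7
    {X Z : Type*}
    [NormedAddCommGroup X] [NormedSpace ℝ X] [CompleteSpace X]
    [NormedAddCommGroup Z] [NormedSpace ℝ Z] [CompleteSpace Z]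
    (Xp : Set X) (hXclosed : IsClosed Xp) (hX0 : (0 : X) ∈ Xp)
    (hXadd : ∀ x ∈ Xp, ∀ y ∈ Xp, x + y ∈ Xp)
    (hXsmul : ∀ a : ℝ, 0 ≤ a → ∀ x ∈ Xp, a • x ∈ Xp)
    (hXcone : ∀ x : X, x ∈ Xp → -x ∈ Xp → x = 0)
    (hXnormal : ∃ M : ℝ, 1 ≤ M ∧ ∀ x y : X, x ∈ Xp → y - x ∈ Xp → ‖x‖ ≤ M * ‖y‖)
    (Zp : Set Z) (hZclosed : IsClosed Zp) (hZ0 : (0 : Z) ∈ Zp)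
    (hZadd : ∀ x ∈ Zp, ∀ y ∈ Zp, x + y ∈ Zp)
    (hZsmul : ∀ a : ℝ, 0 ≤ a → ∀ x ∈ Zp, a • x ∈ Zp)
    (J : X →L[ℝ] Z)
    (hJpos : ∀ x ∈ Xp, J x ∈ Zp)
    (hJdense : DenseRange J)
    (R : ℕ → Z →L[ℝ] X)
    (hRpos : ∀ n : ℕ, ∀ z ∈ Zp, R n z ∈ Xp)
    (hJR : ∀ (z : Z) (z' : Z →L[ℝ] ℝ),
      Filter.Tendsto (fun n => z' (J (R n z))) Filter.atTop (nhds (z' z)))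
    (hRJ : ∀ (x : X) (x' : X →L[ℝ] ℝ),
      Filter.Tendsto (fun n => x' (R n (J x))) Filter.atTop (nhds (x' x)))
    (hXface : IsFaceOf ((NormedSpace.inclusionInDoubleDual ℝ X) '' Xp)
      (dualWedge (dualWedge Xp))) :
    IsFaceOf (J '' Xp) Zp ∧ (∀ z : Z, z ∈ Zp → -z ∈ Zp → z = 0) := by
  obtain ⟨M, hM1, hM⟩ := hXnormal
  refine ⟨⟨?_, ⟨⟨J 0, 0, hX0, rfl⟩, ?_, ?_⟩, ?_⟩, ?_⟩
  · rintro _ ⟨x, hx, rfl⟩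
    exact hJpos x hx
  · rintro _ ⟨x, hx, rfl⟩ _ ⟨y, hy, rfl⟩
    exact ⟨x + y, hXadd x hx y hy, map_add J x y⟩
  · rintro a ha _ ⟨x, hx, rfl⟩
    exact ⟨a • x, hXsmul a ha x hx, map_smul J a x⟩
  · rintro _ ⟨x, hx, rfl⟩ z hz hxz
    -- boundedness of `R n (J x)`
    obtain ⟨C, hC⟩ : ∃ C, ∀ n, ‖NormedSpace.inclusionInDoubleDual ℝ X (R n (J x))‖ ≤ C := by
      apply banach_steinhaus
      intro f
      obtain ⟨c, hc⟩ := (hRJ x f).norm.bddAbove_range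
      refine ⟨c, fun n => ?_⟩
      have := hc ⟨n, rfl⟩
      simpa using this
    have hC' : ∀ n, ‖R n (J x)‖ ≤ C := fun n => by
      have h := (NormedSpace.inclusionInDoubleDualLi ℝ (E := X)).norm_map (R n (J x))
      rw [← h]
      exact hC n
    have hb : ∀ n, ‖NormedSpace.inclusionInDoubleDual ℝ X (R n z)‖ ≤ M * C := fun n => by
      have h := (NormedSpace.inclusionInDoubleDualLi ℝ (E := X)).norm_map (R n z)
      have h2 : ‖R n z‖ ≤ M * ‖R n (J x)‖ := by
        apply hM _ _ (hRpos n z hz)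
        rw [← map_sub]
        exact hRpos n _ hxz
      have h3 : M * ‖R n (J x)‖ ≤ M * C := mul_le_mul_of_nonneg_left (hC' n) (by linarith)
      exact (h.le.trans h2).trans h3
    have hcomp := WeakDual.isCompact_closedBall (𝕜 := ℝ) (E := X →L[ℝ] ℝ) 0 (M * C)
    let u : ℕ → WeakDual ℝ (X →L[ℝ] ℝ) := fun n =>
      StrongDual.toWeakDual (NormedSpace.inclusionInDoubleDual ℝ X (R n z))
    let U : Ultrafilter ℕ := Filter.hyperfilter ℕ
    have hU : (U : Filter ℕ) ≤ Filter.atTop := by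
      rw [← Nat.cofinite_eq_atTop]
      exact Filter.hyperfilter_le_cofinite
    obtain ⟨g, -, hg⟩ := hcomp.ultrafilter_le_nhds (U.map u) (by
      rw [Filter.le_principal_iff]
      refine Filter.mem_map.2 (Filter.univ_mem' fun n => ?_)
      have := hb n
      simpa [u] using this)
    have hlim : ∀ f : X →L[ℝ] ℝ, Filter.Tendsto (fun n => f (R n z)) U (nhds (g f)) := by
      intro f
      have h1 : Filter.Tendsto u U (nhds g) := hg
      have h2 := ((WeakDual.eval_continuous (𝕜 := ℝ) f).tendsto g).comp h1
      exact h2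
    let G : (X →L[ℝ] ℝ) →L[ℝ] ℝ := WeakDual.toStrongDual g
    have hG : ∀ f, G f = g f := fun f => rfl
    obtain ⟨y, hy, hyG⟩ := hXface.2.2 _ ⟨x, hx, rfl⟩ G
      (by
        intro f hf
        rw [hG]
        exact ge_of_tendsto' (hlim f) fun n => hf _ (hRpos n z hz))
      (by
        intro f hf
        have h1 := ((hRJ x f).mono_left hU).sub (hlim f)
        have h2 : 0 ≤ f x - g f := ge_of_tendsto' h1 fun n => by
          rw [← map_sub, ← map_sub]
          exact hf _ (hRpos n _ hxz)
        exact h2)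
    refine ⟨y, hy, ?_⟩
    refine NormedSpace.eq_iff_forall_dual_eq ℝ |>.2 fun z' => ?_
    have h1 := hlim (z'.comp J)
    have h2 := (hJR z z').mono_left hU
    have h3 : g (z'.comp J) = z' z := tendsto_nhds_unique h1 h2
    rw [← h3, ← hG, ← hyG]
    rfl
  · intro z hz hnz
    have h0 : ∀ n, R n z = 0 := fun n => hXcone _ (hRpos n z hz) (by
      rw [← map_neg]
      exact hRpos n _ hnz)
    refine NormedSpace.eq_zero_of_forall_dual_eq_zero ℝ fun z' => ?_
    have h := hJR z z'
    simp only [h0, map_zero] at h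
    exact (tendsto_nhds_unique h tendsto_const_nhds)
end

section
/- Let X be an ordered Banach space, let Z be a pre-ordered Banach space, let J : X → Z be a positive bounded linear operator, and assume there is a sequence (R_n) of positive bounded linear operators Z → X such that (R_n J) converges to the identity of X in the weak operator topology. Then J is bipositive: for every x ∈ X, Jx ∈ Z_+ implies x ∈ X_+. -/
/-- Let `X` be an ordered Banach space, `Z` a pre-ordered Banach space, `J : X → Z` a
positive bounded linear operator, and `(Rₙ)` a sequence of positive bounded linear
operators `Z → X` such that `(Rₙ J)` converges to the identity of `X` in the weak
operator topology.  Then `J` is bipositive: `J x ∈ Zp` implies `x ∈ Xp`. -/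
theorem stmt_8
    {X Z : Type*}
    [NormedAddCommGroup X] [NormedSpace ℝ X] [CompleteSpace X]
    [NormedAddCommGroup Z] [NormedSpace ℝ Z] [CompleteSpace Z]
    (Xp : Set X) (hXclosed : IsClosed Xp) (hX0 : (0 : X) ∈ Xp)
    (hXadd : ∀ x ∈ Xp, ∀ y ∈ Xp, x + y ∈ Xp)
    (hXsmul : ∀ a : ℝ, 0 ≤ a → ∀ x ∈ Xp, a • x ∈ Xp)
    (hXcone : ∀ x : X, x ∈ Xp → -x ∈ Xp → x = 0)
    (Zp : Set Z) (hZclosed : IsClosed Zp) (hZ0 : (0 : Z) ∈ Zp)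
    (hZadd : ∀ x ∈ Zp, ∀ y ∈ Zp, x + y ∈ Zp)
    (hZsmul : ∀ a : ℝ, 0 ≤ a → ∀ x ∈ Zp, a • x ∈ Zp)
    (J : X →L[ℝ] Z)
    (hJpos : ∀ x ∈ Xp, J x ∈ Zp)
    (R : ℕ → Z →L[ℝ] X)
    (hRpos : ∀ n : ℕ, ∀ z ∈ Zp, R n z ∈ Xp)
    (hRJ : ∀ (x : X) (x' : X →L[ℝ] ℝ),
      Filter.Tendsto (fun n => x' (R n (J x))) Filter.atTop (nhds (x' x))) :
    ∀ x : X, J x ∈ Zp → x ∈ Xp := by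
  intro x hx
  by_contra hn
  have hconv : Convex ℝ Xp := by
    intro a ha b hb s t hs ht _
    exact hXadd _ (hXsmul s hs a ha) _ (hXsmul t ht b hb)
  obtain ⟨f, u, hfx, hfu⟩ := geometric_hahn_banach_point_closed hconv hXclosed hn
  have h : u ≤ f x :=
    ge_of_tendsto' (hRJ x f) (fun n => (hfu _ (hRpos n _ hx)).le)
  exact absurd hfx (not_lt.mpr h)
end

section
/- Let D, E, and Ẽ be ordered Banach spaces such that the cone Ẽ_+ is generating and normal, and let J : D → E and J̃ : D → Ẽ be positive bounded linear operators such that J̃ is bipositive and its range is majorizing in Ẽ. Then there exists a number c ≥ 0, depending only on D, E, Ẽ, J, and J̃, such that for every ordered Banach space X and every positive bounded linear operator T : X → D, the dual operator (J∘T)' maps the span of E'_+ into X' with ‖(J∘T)' e'‖_{X'} ≤ c · ‖J̃∘T‖_{X → Ẽ} · ‖e'‖_{E'_+ − E'_+} for every e' ∈ E'_+ − E'_+. -/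
/-- Baire step: approximate majorization with norm control. -/
lemma approx_major {D Et : Type*}
    [NormedAddCommGroup D] [NormedSpace ℝ D]
    [NormedAddCommGroup Et] [NormedSpace ℝ Et] [CompleteSpace Et]
    (Etp : Set Et) (hEt0 : (0 : Et) ∈ Etp)
    (hEtadd : ∀ x ∈ Etp, ∀ y ∈ Etp, x + y ∈ Etp)
    (hEtsmul : ∀ a : ℝ, 0 ≤ a → ∀ x ∈ Etp, a • x ∈ Etp)
    (Jt : D →L[ℝ] Et) (hJtmaj : ∀ z : Et, ∃ x : D, Jt x - z ∈ Etp) :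
    ∃ K : ℝ, 0 ≤ K ∧ ∀ z : Et, ∃ d : D, ∃ s : Et, Jt d - s ∈ Etp ∧ ‖d‖ ≤ K * ‖z‖ ∧
      ‖z - s‖ ≤ ‖z‖ / 2 := by
  let A : ℕ → Set Et := fun n => {z | ∃ d : D, ‖d‖ ≤ n ∧ Jt d - z ∈ Etp}
  have hU : (⋃ n, closure (A n)) = Set.univ := by
    refine Set.eq_univ_of_forall fun z => ?_
    obtain ⟨d, hd⟩ := hJtmaj z
    obtain ⟨n, hn⟩ := exists_nat_ge ‖d‖
    exact Set.mem_iUnion.2 ⟨n, subset_closure ⟨d, hn, hd⟩⟩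
  obtain ⟨n, z0, hz0⟩ := nonempty_interior_of_iUnion_of_closed (fun n => isClosed_closure) hU
  obtain ⟨r, hr, hball⟩ := Metric.isOpen_iff.1 isOpen_interior z0 hz0
  obtain ⟨d0, hd0⟩ := hJtmaj (-z0)
  refine ⟨2 / r * (n + ‖d0‖), by positivity, fun z => ?_⟩
  by_cases hz : z = 0
  · exact ⟨0, 0, by simpa using hEt0, by simp [hz], by simp [hz]⟩
  have hzn : 0 < ‖z‖ := norm_pos_iff.2 hz
  set t : ℝ := r / (2 * ‖z‖) with ht
  have htpos : 0 < t := by positivity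
  have hw : z0 + t • z ∈ closure (A n) := by
    apply interior_subset
    apply hball
    rw [Metric.mem_ball, dist_eq_norm, add_sub_cancel_left, norm_smul, Real.norm_eq_abs,
      abs_of_pos htpos, ht]
    field_simp
    linarith
  obtain ⟨s', ⟨d', hd', hs'⟩, hdist⟩ := Metric.mem_closure_iff.1 hw (r / 4) (by positivity)
  refine ⟨t⁻¹ • (d' + d0), t⁻¹ • (s' - z0), ?_, ?_, ?_⟩
  · have := hEtsmul t⁻¹ (by positivity) _ (hEtadd _ hs' _ hd0)
    convert this using 1
    simp only [map_smul, map_add, ← smul_sub]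
    congr 1
    abel
  · rw [norm_smul, Real.norm_eq_abs, abs_of_pos (by positivity)]
    calc t⁻¹ * ‖d' + d0‖ ≤ t⁻¹ * (n + ‖d0‖) := by
          gcongr
          exact (norm_add_le _ _).trans (by gcongr)
      _ = 2 / r * (n + ‖d0‖) * ‖z‖ := by rw [ht]; field_simp
  · have h1 : z - t⁻¹ • (s' - z0) = t⁻¹ • (z0 + t • z - s') := by
      have : z = t⁻¹ • (t • z) := by rw [smul_smul, inv_mul_cancel₀ htpos.ne', one_smul]
      conv_lhs => rw [this]
      rw [← smul_sub]
      congr 1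
      abel
    rw [h1, norm_smul, Real.norm_eq_abs, abs_of_pos (by positivity)]
    rw [dist_eq_norm] at hdist
    calc t⁻¹ * ‖z0 + t • z - s'‖ ≤ t⁻¹ * (r / 4) := by gcongr
      _ = ‖z‖ / 2 := by rw [ht]; field_simp; norm_num

/-- Exact majorization with norm control. -/
lemma exact_major {D Et : Type*}
    [NormedAddCommGroup D] [NormedSpace ℝ D] [CompleteSpace D]
    [NormedAddCommGroup Et] [NormedSpace ℝ Et] [CompleteSpace Et]
    (Etp : Set Et) (hEtclosed : IsClosed Etp) (hEt0 : (0 : Et) ∈ Etp)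
    (hEtadd : ∀ x ∈ Etp, ∀ y ∈ Etp, x + y ∈ Etp)
    (hEtsmul : ∀ a : ℝ, 0 ≤ a → ∀ x ∈ Etp, a • x ∈ Etp)
    (Jt : D →L[ℝ] Et) (hJtmaj : ∀ z : Et, ∃ x : D, Jt x - z ∈ Etp) :
    ∃ C : ℝ, 0 ≤ C ∧ ∀ z : Et, ∃ d : D, Jt d - z ∈ Etp ∧ ‖d‖ ≤ C * ‖z‖ := by
  obtain ⟨K, hK, h⟩ := approx_major Etp hEt0 hEtadd hEtsmul Jt hJtmaj
  choose d s h1 h2 h3 using h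
  refine ⟨K * 2, by positivity, fun z => ?_⟩
  let g : ℕ → Et := fun n => Nat.rec z (fun _ w => w - s w) n
  have gs : ∀ n, g (n + 1) = g n - s (g n) := fun n => rfl
  have gn : ∀ n, ‖g n‖ ≤ ‖z‖ * (1 / 2) ^ n := by
    intro n
    induction n with
    | zero => simp [g]
    | succ n ih =>
      rw [gs, pow_succ]
      have := h3 (g n)
      linarith
  have hb : ∀ n, ‖d (g n)‖ ≤ K * ‖z‖ * (1 / 2) ^ n := fun n =>
    (h2 (g n)).trans (by rw [mul_assoc]; exact mul_le_mul_of_nonneg_left (gn n) hK)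
  have hgeo : HasSum (fun n : ℕ => K * ‖z‖ * (1 / 2 : ℝ) ^ n) (K * ‖z‖ * 2) :=
    hasSum_geometric_two.mul_left _
  have hsum : Summable (fun n => d (g n)) := Summable.of_norm_bounded hgeo.summable hb
  have hpart : ∀ n, Jt (∑ i ∈ Finset.range n, d (g i)) - (z - g n) ∈ Etp := by
    intro n
    induction n with
    | zero => simpa [g] using hEt0
    | succ n ih =>
      have := hEtadd _ ih _ (h1 (g n))
      convert this using 1
      rw [Finset.sum_range_succ, map_add, gs]
      abel
  refine ⟨∑' n, d (g n), ?_, ?_⟩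
  · have hg0 : Filter.Tendsto g Filter.atTop (nhds 0) := by
      apply squeeze_zero_norm gn
      simpa using (tendsto_pow_atTop_nhds_zero_of_lt_one (r := (1 / 2 : ℝ)) (by norm_num)
        (by norm_num)).const_mul ‖z‖
    have hl := ((Jt.continuous.tendsto _).comp hsum.hasSum.tendsto_sum_nat).sub
      ((tendsto_const_nhds (x := z)).sub hg0)
    rw [sub_zero] at hl
    exact hEtclosed.mem_of_tendsto hl (Filter.Eventually.of_forall hpart)
  · have := tsum_of_norm_bounded hgeo hb
    linarith

/-- Let `D`, `E`, `Ẽ` be ordered Banach spaces with `Ẽ₊` generating and normal, and let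
`J : D → E`, `J̃ : D → Ẽ` be positive bounded linear operators with `J̃` bipositive and
its range majorizing in `Ẽ`.  Then there is `c ≥ 0` (depending only on the data so
far) such that for every ordered Banach space `X` and every positive bounded operator
`T : X → D`, and every `e'` in the span of the dual wedge of `E`, written as
`e' = y - z` with `y, z` in the dual wedge, one has
`‖(J∘T)' e'‖ ≤ c ⬝ ‖J̃∘T‖ ⬝ (‖y‖ + ‖z‖)`; as `‖e'‖_{E'₊ - E'₊}` is the infimum of
`‖y‖ + ‖z‖` over all such decompositions, this says exactly
`‖(J∘T)' e'‖ ≤ c ⬝ ‖J̃∘T‖ ⬝ ‖e'‖_{E'₊ - E'₊}`. -/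
theorem stmt_9
    {D E Et : Type*}
    [NormedAddCommGroup D] [NormedSpace ℝ D] [CompleteSpace D]
    [NormedAddCommGroup E] [NormedSpace ℝ E] [CompleteSpace E]
    [NormedAddCommGroup Et] [NormedSpace ℝ Et] [CompleteSpace Et]
    (Dp : Set D) (hDclosed : IsClosed Dp) (hD0 : (0 : D) ∈ Dp)
    (hDadd : ∀ x ∈ Dp, ∀ y ∈ Dp, x + y ∈ Dp)
    (hDsmul : ∀ a : ℝ, 0 ≤ a → ∀ x ∈ Dp, a • x ∈ Dp)
    (hDcone : ∀ x : D, x ∈ Dp → -x ∈ Dp → x = 0)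
    (Ep : Set E) (hEclosed : IsClosed Ep) (hE0 : (0 : E) ∈ Ep)
    (hEadd : ∀ x ∈ Ep, ∀ y ∈ Ep, x + y ∈ Ep)
    (hEsmul : ∀ a : ℝ, 0 ≤ a → ∀ x ∈ Ep, a • x ∈ Ep)
    (hEcone : ∀ x : E, x ∈ Ep → -x ∈ Ep → x = 0)
    (Etp : Set Et) (hEtclosed : IsClosed Etp) (hEt0 : (0 : Et) ∈ Etp)
    (hEtadd : ∀ x ∈ Etp, ∀ y ∈ Etp, x + y ∈ Etp)
    (hEtsmul : ∀ a : ℝ, 0 ≤ a → ∀ x ∈ Etp, a • x ∈ Etp)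
    (hEtcone : ∀ x : Et, x ∈ Etp → -x ∈ Etp → x = 0)
    (hEtgen : ∀ x : Et, ∃ a ∈ Etp, ∃ b ∈ Etp, x = a - b)
    (hEtnormal : ∃ M : ℝ, 1 ≤ M ∧ ∀ x y : Et, x ∈ Etp → y - x ∈ Etp → ‖x‖ ≤ M * ‖y‖)
    (J : D →L[ℝ] E) (hJpos : ∀ x ∈ Dp, J x ∈ Ep)
    (Jt : D →L[ℝ] Et) (hJtbipos : ∀ x : D, Jt x ∈ Etp ↔ x ∈ Dp)
    (hJtmaj : ∀ z : Et, ∃ x : D, Jt x - z ∈ Etp) :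
    ∃ c : ℝ, 0 ≤ c ∧
      ∀ (X : Type u) [NormedAddCommGroup X] [NormedSpace ℝ X] [CompleteSpace X]
        (Xp : Set X), IsClosed Xp → (0 : X) ∈ Xp →
        (∀ x ∈ Xp, ∀ y ∈ Xp, x + y ∈ Xp) →
        (∀ a : ℝ, 0 ≤ a → ∀ x ∈ Xp, a • x ∈ Xp) →
        (∀ x : X, x ∈ Xp → -x ∈ Xp → x = 0) →
        ∀ T : X →L[ℝ] D, (∀ x ∈ Xp, T x ∈ Dp) →
        ∀ y' z' : E →L[ℝ] ℝ, (∀ e ∈ Ep, 0 ≤ y' e) → (∀ e ∈ Ep, 0 ≤ z' e) →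
        ‖(y' - z').comp (J.comp T)‖ ≤ c * ‖Jt.comp T‖ * (‖y'‖ + ‖z'‖) := by
  obtain ⟨C, hC, hmaj⟩ := exact_major Etp hEtclosed hEt0 hEtadd hEtsmul Jt hJtmaj
  have key : ∀ y' : E →L[ℝ] ℝ, (∀ e ∈ Ep, 0 ≤ y' e) → ∀ d : D,
      y' (J d) ≤ ‖J‖ * C * ‖Jt d‖ * ‖y'‖ := by
    intro y' hy d
    obtain ⟨d1, hd1, hn⟩ := hmaj (Jt d)
    rw [← map_sub, hJtbipos] at hd1
    have h := hy _ (hJpos _ hd1)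
    rw [map_sub, map_sub] at h
    calc y' (J d) ≤ y' (J d1) := by linarith
      _ ≤ ‖y' (J d1)‖ := Real.le_norm_self _
      _ ≤ ‖y'‖ * (‖J‖ * (C * ‖Jt d‖)) :=
        (y'.le_opNorm _).trans (by gcongr; exact (J.le_opNorm _).trans (by gcongr))
      _ = _ := by ring
  have key2 : ∀ y' : E →L[ℝ] ℝ, (∀ e ∈ Ep, 0 ≤ y' e) → ∀ d : D,
      |y' (J d)| ≤ ‖J‖ * C * ‖Jt d‖ * ‖y'‖ := by
    intro y' hy d
    refine abs_le'.2 ⟨key y' hy d, ?_⟩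
    simpa using key y' hy (-d)
  refine ⟨‖J‖ * C, by positivity, ?_⟩
  intro X _ _ _ Xp _ _ _ _ _ T _ y' z' hy hz
  refine ContinuousLinearMap.opNorm_le_bound _ (by positivity) fun x => ?_
  have a1 := key2 y' hy (T x)
  have a2 := key2 z' hz (T x)
  have a3 : ‖Jt (T x)‖ ≤ ‖Jt.comp T‖ * ‖x‖ := (Jt.comp T).le_opNorm x
  calc ‖((y' - z').comp (J.comp T)) x‖ = |y' (J (T x)) - z' (J (T x))| := rfl
    _ ≤ |y' (J (T x))| + |z' (J (T x))| := abs_sub _ _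
    _ ≤ ‖J‖ * C * ‖Jt (T x)‖ * (‖y'‖ + ‖z'‖) := by linarith
    _ ≤ ‖J‖ * C * (‖Jt.comp T‖ * ‖x‖) * (‖y'‖ + ‖z'‖) := by gcongr
    _ = _ := by ring
end

section
/- Let X and X̃ be ordered Banach spaces with X_+ generating in X, let Y be a Banach space, and let (F(t))_{t ∈ [0,1]} be a family of bounded linear operators X̃ → Y such that for each x ∈ X̃ the orbit t ↦ F(t)x is strongly (Bochner) measurable on [0,1]. Let J : X̃ → X be a positive bounded linear operator and assume: (a) there is a sequence (R_n) of positive bounded linear operators X → X̃ such that (J R_n) converges strongly to the identity of X and (R_n J) converges strongly to the identity of X̃; (b) there exists M̃ ≥ 0 such that ∫₀¹ ‖F(t)x‖ dt ≤ M̃ ‖Jx‖ for every x ∈ X̃_+. Then there exists M ≥ 0 such that ∫₀¹ ‖F(t)x‖ dt ≤ M ‖Jx‖ for every x ∈ X̃. -/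
open MeasureTheory

theorem ando_aux {X : Type*} [NormedAddCommGroup X] [NormedSpace ℝ X] [CompleteSpace X]
    (Xp : Set X) (hXclosed : IsClosed Xp) (hX0 : (0 : X) ∈ Xp)
    (hXadd : ∀ x ∈ Xp, ∀ y ∈ Xp, x + y ∈ Xp)
    (hXsmul : ∀ a : ℝ, 0 ≤ a → ∀ x ∈ Xp, a • x ∈ Xp)
    (hXgen : ∀ x : X, ∃ a ∈ Xp, ∃ b ∈ Xp, x = a - b) :
    ∃ C : ℝ, 0 < C ∧ ∀ x : X, ∃ a ∈ Xp, ∃ b ∈ Xp, x = a - b ∧ ‖a‖ ≤ C * ‖x‖ ∧ ‖b‖ ≤ C * ‖x‖ := by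
  classical
  let S := {s : X // s ∈ Xp ∧ ‖s‖ ≤ 1}
  let L := lp (fun _ : S => ℝ) 1
  have hsum : ∀ f : L, Summable (fun s : S => |f s|) := by
    intro f
    have h := lp.memℓp f
    rw [memℓp_gen_iff (by norm_num)] at h
    simpa using h
  have hnorm : ∀ f : L, ‖f‖ = ∑' s : S, |f s| := by
    intro f
    rw [lp.norm_eq_tsum_rpow (by norm_num)]
    simp
  -- general bounded coefficient facts
  have key : ∀ (f : L) (g : S → ℝ), (∀ s, |g s| ≤ |f s|) →
      Summable (fun s : S => g s • s.1) ∧ ‖∑' s : S, g s • s.1‖ ≤ ‖f‖ := by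
    intro f g hg
    have hb : ∀ s : S, ‖g s • s.1‖ ≤ |f s| := by
      intro s
      rw [norm_smul, Real.norm_eq_abs]
      calc |g s| * ‖s.1‖ ≤ |g s| * 1 := mul_le_mul_of_nonneg_left s.2.2 (abs_nonneg _)
        _ ≤ |f s| := by simpa using hg s
    refine ⟨Summable.of_norm_bounded (hsum f) hb, ?_⟩
    rw [hnorm f]
    exact tsum_of_norm_bounded (hsum f).hasSum hb
  have hmem : ∀ g : S → ℝ, (∀ s, 0 ≤ g s) → Summable (fun s : S => g s • s.1) →
      ∑' s : S, g s • s.1 ∈ Xp := by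
    intro g hg hs
    refine hXclosed.mem_of_tendsto hs.hasSum (Filter.Eventually.of_forall fun t => ?_)
    exact Finset.sum_induction _ (· ∈ Xp) (fun a b ha hb => hXadd a ha b hb) hX0
      (fun s _ => hXsmul _ (hg s) _ s.2.1)
  let T0 : L →ₗ[ℝ] X :=
    { toFun := fun f => ∑' s : S, f s • s.1
      map_add' := by
        intro f g
        rw [← (key f f (fun _ => le_rfl)).1.tsum_add (key g g (fun _ => le_rfl)).1]
        refine tsum_congr fun s => ?_
        rw [← add_smul]; rfl
      map_smul' := by
        intro c f
        rw [RingHom.id_apply, ← (key f f (fun _ => le_rfl)).1.tsum_const_smul c]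
        refine tsum_congr fun s => ?_
        rw [smul_smul]; rfl }
  let T : L →L[ℝ] X := T0.mkContinuous 1 (fun f => by
    rw [one_mul]; exact (key f f (fun _ => le_rfl)).2)
  have hT : ∀ f : L, T f = ∑' s : S, f s • s.1 := fun f => rfl
  have hrange : ∀ a ∈ Xp, ∃ f : L, T f = a := by
    intro a ha
    have hpos : 0 < ‖a‖ + 1 := by positivity
    let s : S := ⟨(‖a‖ + 1)⁻¹ • a, hXsmul _ (by positivity) _ ha, by
      rw [norm_smul, norm_inv, Real.norm_of_nonneg hpos.le, inv_mul_le_iff₀ hpos]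
      linarith⟩
    refine ⟨lp.single 1 s (‖a‖ + 1), ?_⟩
    rw [hT, tsum_eq_single s]
    · simp [s, smul_smul, hpos.ne']
    · intro t ht
      simp [lp.single_apply, ht]
  have hsurj : Function.Surjective T := by
    intro x
    obtain ⟨a, ha, b, hb, rfl⟩ := hXgen x
    obtain ⟨f, rfl⟩ := hrange a ha
    obtain ⟨g, rfl⟩ := hrange b hb
    exact ⟨f - g, map_sub _ _ _⟩
  obtain ⟨C, hC, h⟩ := T.exists_preimage_norm_le hsurj
  refine ⟨C, hC, fun x => ?_⟩
  obtain ⟨f, hf, hfn⟩ := h x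
  have h1 := key f (fun s => max (f s) 0) (fun s => by
    rw [abs_of_nonneg (le_max_right _ _)]; exact max_le (le_abs_self _) (abs_nonneg _))
  have h2 := key f (fun s => max (-f s) 0) (fun s => by
    rw [abs_of_nonneg (le_max_right _ _)]; exact max_le (neg_le_abs _) (abs_nonneg _))
  refine ⟨_, hmem _ (fun s => le_max_right _ _) h1.1, _, hmem _ (fun s => le_max_right _ _) h2.1,
    ?_, h1.2.trans hfn, h2.2.trans hfn⟩
  rw [← hf, hT, ← h1.1.tsum_sub h2.1]
  refine tsum_congr fun s => ?_
  rw [← sub_smul]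
  congr 1
  rcases le_total (f s) 0 with h | h
  · rw [max_eq_right h, max_eq_left (by linarith)]; ring
  · rw [max_eq_left h, max_eq_right (by linarith)]; ring

/-- Let `X`, `X̃` be ordered Banach spaces with `Xp` generating, let `Y` be a Banach space,
and let `(F t)_{t ∈ [0,1]}` be a family of bounded operators `X̃ → Y` with strongly
measurable orbits.  Let `J : X̃ → X` be positive and bounded, assume
(a) there are positive operators `Rₙ : X → X̃` with `J Rₙ → id` strongly on `X` and
`Rₙ J → id` strongly on `X̃`, and (b) there is `M̃ ≥ 0` with
`∫₀¹ ‖F t x‖ dt ≤ M̃ ‖J x‖` for every `x ∈ X̃₊`.  Then there is `M ≥ 0` with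
`∫₀¹ ‖F t x‖ dt ≤ M ‖J x‖` for every `x ∈ X̃`. -/
theorem stmt_10
    {X Xt Y : Type*}
    [NormedAddCommGroup X] [NormedSpace ℝ X] [CompleteSpace X]
    [NormedAddCommGroup Xt] [NormedSpace ℝ Xt] [CompleteSpace Xt]
    [NormedAddCommGroup Y] [NormedSpace ℝ Y] [CompleteSpace Y]
    (Xp : Set X) (hXclosed : IsClosed Xp) (hX0 : (0 : X) ∈ Xp)
    (hXadd : ∀ x ∈ Xp, ∀ y ∈ Xp, x + y ∈ Xp)
    (hXsmul : ∀ a : ℝ, 0 ≤ a → ∀ x ∈ Xp, a • x ∈ Xp)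
    (hXcone : ∀ x : X, x ∈ Xp → -x ∈ Xp → x = 0)
    (hXgen : ∀ x : X, ∃ a ∈ Xp, ∃ b ∈ Xp, x = a - b)
    (Xtp : Set Xt) (hXtclosed : IsClosed Xtp) (hXt0 : (0 : Xt) ∈ Xtp)
    (hXtadd : ∀ x ∈ Xtp, ∀ y ∈ Xtp, x + y ∈ Xtp)
    (hXtsmul : ∀ a : ℝ, 0 ≤ a → ∀ x ∈ Xtp, a • x ∈ Xtp)
    (hXtcone : ∀ x : Xt, x ∈ Xtp → -x ∈ Xtp → x = 0)
    (F : ℝ → Xt →L[ℝ] Y)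
    (hFmeas : ∀ x : Xt, AEStronglyMeasurable (fun t => F t x)
      (volume.restrict (Set.Icc (0:ℝ) 1)))
    (J : Xt →L[ℝ] X)
    (hJpos : ∀ x ∈ Xtp, J x ∈ Xp)
    (R : ℕ → X →L[ℝ] Xt)
    (hRpos : ∀ n : ℕ, ∀ x ∈ Xp, R n x ∈ Xtp)
    (hJR : ∀ x : X, Filter.Tendsto (fun n => J (R n x)) Filter.atTop (nhds x))
    (hRJ : ∀ x : Xt, Filter.Tendsto (fun n => R n (J x)) Filter.atTop (nhds x))
    (Mt : ℝ) (hMt : 0 ≤ Mt)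
    (hbound : ∀ x ∈ Xtp,
      (∫⁻ t in Set.Icc (0:ℝ) 1, (‖F t x‖₊ : ENNReal) ∂volume)
        ≤ ENNReal.ofReal (Mt * ‖J x‖)) :
    ∃ M : ℝ, 0 ≤ M ∧ ∀ x : Xt,
      (∫⁻ t in Set.Icc (0:ℝ) 1, (‖F t x‖₊ : ENNReal) ∂volume)
        ≤ ENNReal.ofReal (M * ‖J x‖) := by
  obtain ⟨C, hC, hdec⟩ := ando_aux Xp hXclosed hX0 hXadd hXsmul hXgen
  refine ⟨Mt * (2 * C), by positivity, fun x => ?_⟩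
  obtain ⟨a, ha, b, hb, hab, hna, hnb⟩ := hdec (J x)
  have hstep : ∀ n, (∫⁻ t in Set.Icc (0:ℝ) 1, (‖F t (R n (J x))‖₊ : ENNReal) ∂volume)
      ≤ ENNReal.ofReal (Mt * ‖J (R n a)‖ + Mt * ‖J (R n b)‖) := by
    intro n
    rw [ENNReal.ofReal_add (by positivity) (by positivity)]
    refine le_trans ?_ (add_le_add (hbound _ (hRpos n a ha)) (hbound _ (hRpos n b hb)))
    have hm : AEMeasurable (fun t => (‖F t (R n a)‖₊ : ENNReal))
        (volume.restrict (Set.Icc (0:ℝ) 1)) := (hFmeas _).enorm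
    rw [← lintegral_add_left' hm]
    refine lintegral_mono fun t => ?_
    rw [hab, map_sub, map_sub]
    exact enorm_sub_le
  have hlim : Filter.Tendsto
      (fun n => ENNReal.ofReal (Mt * ‖J (R n a)‖ + Mt * ‖J (R n b)‖)) Filter.atTop
      (nhds (ENNReal.ofReal (Mt * ‖a‖ + Mt * ‖b‖))) :=
    ENNReal.tendsto_ofReal
      (((hJR a).norm.const_mul Mt).add ((hJR b).norm.const_mul Mt))
  calc (∫⁻ t in Set.Icc (0:ℝ) 1, (‖F t x‖₊ : ENNReal) ∂volume)
      = ∫⁻ t in Set.Icc (0:ℝ) 1, Filter.liminf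
          (fun n => (‖F t (R n (J x))‖₊ : ENNReal)) Filter.atTop ∂volume := by
        refine lintegral_congr fun t => ?_
        have h1 : Filter.Tendsto (fun n => F t (R n (J x))) Filter.atTop (nhds (F t x)) :=
          ((F t).continuous.tendsto x).comp (hRJ x)
        exact (Filter.Tendsto.liminf_eq h1.enorm).symm
    _ ≤ Filter.liminf (fun n => ∫⁻ t in Set.Icc (0:ℝ) 1,
          (‖F t (R n (J x))‖₊ : ENNReal) ∂volume) Filter.atTop :=
        lintegral_liminf_le' (fun n => (hFmeas _).enorm)
    _ ≤ Filter.liminf (fun n => ENNReal.ofReal (Mt * ‖J (R n a)‖ + Mt * ‖J (R n b)‖))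
          Filter.atTop := Filter.liminf_le_liminf (Filter.Eventually.of_forall hstep)
    _ = ENNReal.ofReal (Mt * ‖a‖ + Mt * ‖b‖) := hlim.liminf_eq
    _ ≤ ENNReal.ofReal (Mt * (2 * C) * ‖J x‖) := by
        refine ENNReal.ofReal_le_ofReal ?_
        have h1 := mul_le_mul_of_nonneg_left hna hMt
        have h2 := mul_le_mul_of_nonneg_left hnb hMt
        linarith
end

section
/- Let U be a Banach space, let Z be an ordered Banach space with normal cone, and let T : U → Z be a bounded linear operator. Then the following are equivalent: (i) T maps the closed unit ball of U into an order-bounded subset of Z, i.e. there exist a, b ∈ Z with T(B_U) ⊆ [a, b]; (ii) there exist an ordered Banach space X̃ possessing a unit, a bounded linear operator T₁ : U → X̃, and a positive bounded linear operator T₂ : X̃ → Z such that T = T₂ ∘ T₁. -/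
theorem aux_shrink_factor {U : Type*} {Z : Type u}
    [NormedAddCommGroup U] [NormedSpace ℝ U] [CompleteSpace U]
    [NormedAddCommGroup Z] [NormedSpace ℝ Z] (T : U →L[ℝ] Z) :
    ∃ (V : Type u) (_ : NormedAddCommGroup V) (_ : NormedSpace ℝ V) (_ : CompleteSpace V)
      (p : U →L[ℝ] V) (S : V →L[ℝ] Z), T = S.comp p ∧
        ∀ v : V, ∀ ε : ℝ, 0 < ε → ∃ u : U, p u = v ∧ ‖u‖ < ‖v‖ + ε := by
  let K : Submodule ℝ U := T.ker
  have hK : IsClosed (K : Set U) := T.isClosed_ker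
  let S0 : (U ⧸ K) →L[ℝ] Z := K.liftQL T le_rfl
  have hS0 : Function.Injective S0 := by
    rw [injective_iff_map_eq_zero]
    intro q
    obtain ⟨x, rfl⟩ := Submodule.Quotient.mk_surjective K q
    intro h
    rw [Submodule.Quotient.mk_eq_zero]
    exact h
  have : Small.{u} (U ⧸ K) := small_of_injective hS0
  let E : Shrink.{u} (U ⧸ K) ≃ₗᵢ[ℝ] (U ⧸ K) :=
    { Shrink.linearEquiv ℝ (U ⧸ K) with norm_map' := fun x => rfl }
  have : CompleteSpace (Shrink.{u} (U ⧸ K)) :=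
    (completeSpace_congr (e := E.toLinearEquiv.toEquiv) E.isometry.isUniformEmbedding).2 inferInstance
  refine ⟨Shrink.{u} (U ⧸ K), inferInstance, inferInstance, inferInstance,
    (E.symm.toContinuousLinearEquiv : (U ⧸ K) →L[ℝ] _).comp K.mkQL,
    S0.comp (E.toContinuousLinearEquiv : _ →L[ℝ] (U ⧸ K)), ?_, ?_⟩
  · ext u
    simp [S0]
  · intro v ε hε
    obtain ⟨u, hu, hn⟩ := Submodule.Quotient.norm_mk_lt (E v) hε
    refine ⟨u, ?_, by simpa using hn⟩
    have : K.mkQL u = E v := hu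
    simp only [ContinuousLinearMap.comp_apply, this]
    simp

theorem aux_unit_ball {X : Type*} [NormedAddCommGroup X] [NormedSpace ℝ X] [CompleteSpace X]
    (P : Set X) (hc : IsClosed P)
    (hadd : ∀ x ∈ P, ∀ y ∈ P, x + y ∈ P)
    (hsmul : ∀ a : ℝ, 0 ≤ a → ∀ x ∈ P, a • x ∈ P)
    (e : X) (he : e ∈ P)
    (hunit : ∀ x : X, ∃ lam : ℝ, 0 < lam ∧ x + lam • e ∈ P ∧ lam • e - x ∈ P) :
    ∃ C : ℝ, ∀ x : X, x + (C * ‖x‖) • e ∈ P := by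
  let F : ℕ → Set X := fun n => {x | x + (n : ℝ) • e ∈ P ∧ (n : ℝ) • e - x ∈ P}
  have hF : ∀ n, IsClosed (F n) := fun n =>
    (hc.preimage (by fun_prop : Continuous fun x : X => x + (n : ℝ) • e)).inter
      (hc.preimage (by fun_prop : Continuous fun x : X => (n : ℝ) • e - x))
  have hU : ⋃ n, F n = Set.univ := by
    refine Set.eq_univ_of_forall fun x => ?_
    obtain ⟨l, hl, h1, h2⟩ := hunit x
    obtain ⟨n, hn⟩ := exists_nat_ge l
    have h3 := hsmul ((n : ℝ) - l) (by linarith) e he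
    refine Set.mem_iUnion.2 ⟨n, ?_, ?_⟩
    · convert hadd _ h1 _ h3 using 1; module
    · convert hadd _ h2 _ h3 using 1; module
  obtain ⟨n, x0, hx0⟩ := nonempty_interior_of_iUnion_of_closed hF hU
  obtain ⟨r, hr, hball⟩ := Metric.isOpen_iff.1 isOpen_interior x0 hx0
  have key : ∀ y : X, ‖y‖ < r → y + (n : ℝ) • e ∈ P := by
    intro y hy
    have h1 : x0 + y ∈ F n := interior_subset (hball (by simpa using hy))
    have h2 : x0 - y ∈ F n := interior_subset (hball (by simpa [dist_eq_norm] using hy))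
    convert hsmul (1/2) (by norm_num) _ (hadd _ h1.1 _ h2.2) using 1
    module
  refine ⟨n * (2 / r), fun x => ?_⟩
  rcases eq_or_ne x 0 with rfl | hx
  · simpa using hsmul 0 le_rfl e he
  have hx' : 0 < ‖x‖ := norm_pos_iff.2 hx
  have h := key ((r / (2 * ‖x‖)) • x) (by
    rw [norm_smul, Real.norm_of_nonneg (by positivity)]
    have : r / (2 * ‖x‖) * ‖x‖ = r / 2 := by field_simp
    linarith)
  convert hsmul (2 * ‖x‖ / r) (by positivity) _ h using 1
  rw [smul_add, smul_smul, smul_smul]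
  have h1 : 2 * ‖x‖ / r * (r / (2 * ‖x‖)) = 1 := by field_simp
  rw [h1, one_smul]
  congr 2
  ring


/-- Let `U` be a Banach space, `Z` an ordered Banach space with normal cone, and
`T : U → Z` bounded linear.  Then `T` maps the closed unit ball of `U` into an
order-bounded subset of `Z` if and only if `T` factorises as `T = T₂ ∘ T₁` through an
ordered Banach space `X̃` possessing a unit `e` (i.e. `X̃ = ⋃_{λ>0} [-λe, λe]`), with
`T₁ : U → X̃` bounded and `T₂ : X̃ → Z` positive and bounded. -/
theorem stmt_11
    {U : Type*} {Z : Type u}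
    [NormedAddCommGroup U] [NormedSpace ℝ U] [CompleteSpace U]
    [NormedAddCommGroup Z] [NormedSpace ℝ Z] [CompleteSpace Z]
    (Zp : Set Z) (hZclosed : IsClosed Zp) (hZ0 : (0 : Z) ∈ Zp)
    (hZadd : ∀ x ∈ Zp, ∀ y ∈ Zp, x + y ∈ Zp)
    (hZsmul : ∀ a : ℝ, 0 ≤ a → ∀ x ∈ Zp, a • x ∈ Zp)
    (hZcone : ∀ z : Z, z ∈ Zp → -z ∈ Zp → z = 0)
    (hZnormal : ∃ M : ℝ, 1 ≤ M ∧ ∀ x y : Z, x ∈ Zp → y - x ∈ Zp → ‖x‖ ≤ M * ‖y‖)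
    (T : U →L[ℝ] Z) :
    (∃ a b : Z, ∀ u : U, ‖u‖ ≤ 1 → T u - a ∈ Zp ∧ b - T u ∈ Zp)
      ↔
    (∃ (Xt : Type u) (_ : NormedAddCommGroup Xt) (_ : NormedSpace ℝ Xt)
        (_ : CompleteSpace Xt) (Xtp : Set Xt),
      IsClosed Xtp ∧ (0 : Xt) ∈ Xtp ∧
      (∀ x ∈ Xtp, ∀ y ∈ Xtp, x + y ∈ Xtp) ∧
      (∀ a : ℝ, 0 ≤ a → ∀ x ∈ Xtp, a • x ∈ Xtp) ∧
      (∀ x : Xt, x ∈ Xtp → -x ∈ Xtp → x = 0) ∧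
      (∃ e ∈ Xtp, ∀ x : Xt, ∃ lam : ℝ, 0 < lam ∧
          x + lam • e ∈ Xtp ∧ lam • e - x ∈ Xtp) ∧
      (∃ (T₁ : U →L[ℝ] Xt) (T₂ : Xt →L[ℝ] Z),
        (∀ x ∈ Xtp, T₂ x ∈ Zp) ∧ T = T₂.comp T₁)) := by
  constructor
  · rintro ⟨a, b, hab⟩
    obtain ⟨V, _, _, _, p, S, hT, hp⟩ := aux_shrink_factor T
    have hb : b ∈ Zp := by simpa using (hab 0 (by simp)).2
    have h1 : ∀ (u : U) (s : ℝ), 0 < s → ‖u‖ ≤ s → T u + s • b ∈ Zp := by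
      intro u s hs hu
      have h := (hab (-(s⁻¹ • u)) (by
        rw [norm_neg, norm_smul, Real.norm_of_nonneg (by positivity), inv_mul_le_iff₀ hs]
        simpa using hu)).2
      convert hZsmul s hs.le _ h using 1
      rw [map_neg, map_smul, sub_neg_eq_add, smul_add, smul_smul, mul_inv_cancel₀ hs.ne', one_smul,
        add_comm]
    have h2 : ∀ (v : V) (t : ℝ), ‖v‖ ≤ t → S v + t • b ∈ Zp := by
      intro v t hv
      have hev : ∀ ε : ℝ, 0 < ε → S v + (t + ε) • b ∈ Zp := by
        intro ε hε
        obtain ⟨u, rfl, hu⟩ := hp v ε hε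
        have := h1 u (t + ε) (by have := norm_nonneg (p u); linarith) (by linarith)
        rwa [hT] at this
      have hlim : Filter.Tendsto (fun ε : ℝ => S v + (t + ε) • b) (nhdsWithin 0 (Set.Ioi 0))
          (nhds (S v + t • b)) := by
        have hcont : Continuous fun ε : ℝ => S v + (t + ε) • b := by fun_prop
        have := hcont.tendsto 0
        simp only [add_zero] at this
        exact this.mono_left nhdsWithin_le_nhds
      exact hZclosed.mem_of_tendsto hlim
        (Filter.eventually_of_mem self_mem_nhdsWithin fun ε hε => hev ε hε)
    -- the space `V × ℝ` with the ice-cream cone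
    refine ⟨V × ℝ, inferInstance, inferInstance, inferInstance, {x | ‖x.1‖ ≤ x.2},
      ?_, ?_, ?_, ?_, ?_, ?_, ?_⟩
    · exact isClosed_le (by fun_prop) (by fun_prop)
    · simp
    · intro x hx y hy
      exact (norm_add_le _ _).trans (add_le_add hx hy)
    · intro c hc x hx
      change ‖c • x.1‖ ≤ c * x.2
      rw [norm_smul, Real.norm_of_nonneg hc]
      exact mul_le_mul_of_nonneg_left hx hc
    · rintro ⟨v, t⟩ hx hy
      change ‖v‖ ≤ t at hx
      change ‖-v‖ ≤ -t at hy
      rw [norm_neg] at hy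
      have h0 := norm_nonneg v
      have ht : t = 0 := by linarith
      have hv : v = 0 := norm_eq_zero.1 (by linarith)
      simp [ht, hv]
    · refine ⟨(0, 1), by simp, ?_⟩
      rintro ⟨v, t⟩
      have h0 := norm_nonneg v
      have h3 := abs_nonneg t
      have h4 := le_abs_self t
      have h5 := neg_abs_le t
      refine ⟨‖v‖ + |t| + 1, by linarith, ?_, ?_⟩
      · simp; linarith
      · simp; linarith
    · refine ⟨(ContinuousLinearMap.inl ℝ V ℝ).comp p,
        S.comp (ContinuousLinearMap.fst ℝ V ℝ) +
          (ContinuousLinearMap.snd ℝ V ℝ).smulRight b, ?_, ?_⟩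
      · rintro ⟨v, t⟩ hx
        simpa using h2 v t hx
      · ext u
        simp [hT]
  · rintro ⟨X, _, _, _, P, hc, -, hadd, hsmul, -, ⟨e, he, hunit⟩, T₁, T₂, hpos, rfl⟩
    obtain ⟨C, hC⟩ := aux_unit_ball P hc hadd hsmul e he hunit
    set D : ℝ := |C| * ‖T₁‖ with hD
    have key : ∀ u : U, ‖u‖ ≤ 1 → T₂ (T₁ u) + D • T₂ e ∈ Zp := by
      intro u hu
      have hle : C * ‖T₁ u‖ ≤ D := by
        have h1 : ‖T₁ u‖ ≤ ‖T₁‖ := T₁.unit_le_opNorm u hu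
        calc C * ‖T₁ u‖ ≤ |C| * ‖T₁ u‖ := by gcongr; exact le_abs_self C
          _ ≤ D := by rw [hD]; gcongr
      have h := hpos _ (hadd _ (hC (T₁ u)) _ (hsmul (D - C * ‖T₁ u‖) (by linarith) e he))
      convert h using 1
      simp only [map_add, map_smul]
      module
    refine ⟨-(D • T₂ e), D • T₂ e, fun u hu => ⟨?_, ?_⟩⟩
    · simpa using key u hu
    · have := key (-u) (by simpa using hu)
      convert this using 1
      simp only [ContinuousLinearMap.comp_apply, map_neg]
      abel
end

section
/- Let U and Z be ordered Banach spaces and let T : U → Z be a positive bounded linear operator. If the closed unit ball of U is upwards directed and every increasing norm-bounded net of positive elements of Z is norm-convergent, then T maps the closed unit ball of U into an order-bounded subset of Z. -/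
/-- Let `U` and `Z` be ordered Banach spaces and let `T : U → Z` be a positive bounded
linear operator.  If the closed unit ball of `U` is upwards directed and every
increasing norm-bounded net of positive elements of `Z` is norm-convergent, then `T`
maps the closed unit ball of `U` into an order-bounded subset of `Z`. -/
theorem stmt_14
    {U Z : Type*}
    [NormedAddCommGroup U] [NormedSpace ℝ U] [CompleteSpace U]
    [NormedAddCommGroup Z] [NormedSpace ℝ Z] [CompleteSpace Z]
    (Up : Set U) (hUclosed : IsClosed Up) (hU0 : (0 : U) ∈ Up)
    (hUadd : ∀ x ∈ Up, ∀ y ∈ Up, x + y ∈ Up)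
    (hUsmul : ∀ a : ℝ, 0 ≤ a → ∀ x ∈ Up, a • x ∈ Up)
    (hUcone : ∀ x : U, x ∈ Up → -x ∈ Up → x = 0)
    (Zp : Set Z) (hZclosed : IsClosed Zp) (hZ0 : (0 : Z) ∈ Zp)
    (hZadd : ∀ x ∈ Zp, ∀ y ∈ Zp, x + y ∈ Zp)
    (hZsmul : ∀ a : ℝ, 0 ≤ a → ∀ x ∈ Zp, a • x ∈ Zp)
    (hZcone : ∀ z : Z, z ∈ Zp → -z ∈ Zp → z = 0)
    (T : U →L[ℝ] Z)
    (hTpos : ∀ u ∈ Up, T u ∈ Zp)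
    (hUdirected : ∀ x₁ x₂ : U, ‖x₁‖ ≤ 1 → ‖x₂‖ ≤ 1 →
      ∃ x : U, ‖x‖ ≤ 1 ∧ x - x₁ ∈ Up ∧ x - x₂ ∈ Up)
    (hZconv : ∀ (ι : Type u) [Preorder ι] [Nonempty ι] [IsDirected ι (· ≤ ·)] (g : ι → Z),
      (∀ i, g i ∈ Zp) → (∀ i j : ι, i ≤ j → g j - g i ∈ Zp) →
      (∃ C : ℝ, ∀ i, ‖g i‖ ≤ C) →
      ∃ z : Z, Filter.Tendsto g Filter.atTop (nhds z)) :
    ∃ a b : Z, ∀ u : U, ‖u‖ ≤ 1 → T u - a ∈ Zp ∧ b - T u ∈ Zp := by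
  classical
  have hseq : ∀ x : ℕ → U, (∀ n, x n ∈ Up ∧ ‖x n‖ ≤ 1) → (∀ n, x (n+1) - x n ∈ Up) →
      ∃ z : Z, Filter.Tendsto (fun n => T (x n)) Filter.atTop (nhds z) := by
    intro x hx hinc
    have hmono : ∀ n k : ℕ, x (n + k) - x n ∈ Up := by
      intro n k
      induction k with
      | zero => simpa using hU0
      | succ k ih =>
        have := hUadd _ (hinc (n + k)) _ ih
        rwa [sub_add_sub_cancel] at this
    haveI : IsDirected (ULift.{u} ℕ) (· ≤ ·) :=
      ⟨fun a b => ⟨⟨max a.down b.down⟩, le_max_left a.down b.down, le_max_right a.down b.down⟩⟩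
    obtain ⟨z, hz⟩ := hZconv (ULift.{u} ℕ) (fun i => T (x i.down))
      (fun i => hTpos _ (hx _).1)
      (by
        intro i j hij
        have hij' : i.down ≤ j.down := hij
        obtain ⟨k, hk⟩ := Nat.exists_eq_add_of_le hij'
        have h := hTpos _ (hmono i.down k)
        rw [map_sub, ← hk] at h
        exact h)
      ⟨‖T‖, fun i => T.unit_le_opNorm _ (hx _).2⟩
    refine ⟨z, ?_⟩
    have hup : Filter.Tendsto (fun n : ℕ => (ULift.up n : ULift.{u} ℕ))
        Filter.atTop Filter.atTop := by
      refine Filter.tendsto_atTop.2 fun b => ?_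
      filter_upwards [Filter.eventually_ge_atTop b.down] with n hn
      exact hn
    exact hz.comp hup
  have hcauchy : ∀ ε : ℝ, 0 < ε → ∃ w : U, (w ∈ Up ∧ ‖w‖ ≤ 1) ∧
      ∀ v : U, (v ∈ Up ∧ ‖v‖ ≤ 1) → v - w ∈ Up → ‖T v - T w‖ < ε := by
    intro ε hε
    by_contra hcon
    push Not at hcon
    choose! f hf hfw hfε using hcon
    let x : ℕ → U := fun n => f^[n] 0
    have hs : ∀ n, x (n+1) = f (x n) := fun n => Function.iterate_succ_apply' f n 0
    have hx : ∀ n, x n ∈ Up ∧ ‖x n‖ ≤ 1 := by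
      intro n
      induction n with
      | zero => exact ⟨hU0, by simp [x]⟩
      | succ n ih => rw [hs]; exact hf _ ih
    obtain ⟨z, hz⟩ := hseq x hx (fun n => by rw [hs]; exact hfw _ (hx n))
    have h1 := ((hz.comp (Filter.tendsto_add_atTop_nat 1)).sub hz).norm
    rw [sub_self, norm_zero] at h1
    have h2 := ge_of_tendsto' h1 (b := ε) (fun n => by
      have := hfε _ (hx n)
      rw [← hs] at this
      exact this)
    linarith
  have hdir : ∀ x y : U, (x ∈ Up ∧ ‖x‖ ≤ 1) → ‖y‖ ≤ 1 →
      ∃ v : U, (v ∈ Up ∧ ‖v‖ ≤ 1) ∧ v - x ∈ Up ∧ v - y ∈ Up := by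
    intro x y hx hy
    obtain ⟨v, hv, h1, h2⟩ := hUdirected x y hx.2 hy
    refine ⟨v, ⟨?_, hv⟩, h1, h2⟩
    simpa using hUadd _ h1 _ hx.1
  have hw' : ∀ n : ℕ, ∃ w : U, (w ∈ Up ∧ ‖w‖ ≤ 1) ∧
      ∀ v : U, (v ∈ Up ∧ ‖v‖ ≤ 1) → v - w ∈ Up → ‖T v - T w‖ < 1 / ((n : ℝ) + 1) :=
    fun n => hcauchy _ (by positivity)
  choose w hw hwε using hw'
  choose! d hd hd1 hd2 using hdir
  let x : ℕ → U := fun n => Nat.rec 0 (fun n y => d y (w n)) n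
  have hs : ∀ n, x (n+1) = d (x n) (w n) := fun n => rfl
  have hx : ∀ n, x n ∈ Up ∧ ‖x n‖ ≤ 1 := by
    intro n
    induction n with
    | zero => exact ⟨hU0, by simp [x]⟩
    | succ n ih => rw [hs]; exact hd _ _ ih (hw n).2
  obtain ⟨b, hb⟩ := hseq x hx (fun n => by rw [hs]; exact hd1 _ _ (hx n) (hw n).2)
  have hxw : ∀ n, x (n+1) - w n ∈ Up := fun n => by
    rw [hs]; exact hd2 _ _ (hx n) (hw n).2
  have hb1 := hb.comp (Filter.tendsto_add_atTop_nat 1)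
  have hlim : ∀ y : ℕ → U, (∀ n, y n ∈ Up ∧ ‖y n‖ ≤ 1) → (∀ n, y n - w n ∈ Up) →
      Filter.Tendsto (fun n => T (y n) - T (w n)) Filter.atTop (nhds 0) := by
    intro y hy hyw
    exact squeeze_zero_norm (fun n => (hwε n _ (hy n) (hyw n)).le)
      tendsto_one_div_add_atTop_nhds_zero_nat
  have hwb : Filter.Tendsto (fun n => T (w n)) Filter.atTop (nhds b) := by
    have := hb1.sub (hlim (fun n => x (n+1)) (fun n => hx (n+1)) hxw)
    simpa using this
  have key : ∀ v : U, ‖v‖ ≤ 1 → b - T v ∈ Zp := by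
    intro v hv
    have h1 := (hlim (fun n => d (w n) v) (fun n => hd _ _ (hw n) hv)
      (fun n => hd1 _ _ (hw n) hv)).add hwb
    have h2 : Filter.Tendsto (fun n => T (d (w n) v) - T v) Filter.atTop (nhds (b - T v)) := by
      simpa using h1.sub_const (T v)
    refine hZclosed.mem_of_tendsto h2 (Filter.Eventually.of_forall fun n => ?_)
    rw [← map_sub]
    exact hTpos _ (hd2 _ _ (hw n) hv)
  refine ⟨-b, b, fun v hv => ⟨?_, key v hv⟩⟩
  have := key (-v) (by simpa using hv)
  rw [map_neg] at this
  rwa [show T v - -b = b - -T v by abel]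
end
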